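/- For every x in the open interval (a,b), the series ∑_{n=0}^∞ c_n y_n(x) converges to f(x); moreover, the convergence is uniform on every compact subset of (a,b). -/

import Mathlib

/-- `(lam, y)` is an eigenpair of the Sturm–Liouville problem
`-y'' + q y = lam y` on `[a,b]` with separated boundary conditions
`y(a) cos α + y'(a) sin α = 0`, `y(b) cos β + y'(b) sin β = 0`:
`y` is twice continuously differentiable on `[a,b]` and not identically zero there. -/
def IsSLEigenpair (a b : ℝ) (q : ℝ → ℝ) (α β : ℝ) (lam : ℝ) (y : ℝ → ℝ) : Prop :=
  ∃ y' y'' : ℝ → ℝ,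
    (∀ x ∈ Set.Icc a b, HasDerivWithinAt y (y' x) (Set.Icc a b) x) ∧
    (∀ x ∈ Set.Icc a b, HasDerivWithinAt y' (y'' x) (Set.Icc a b) x) ∧
    ContinuousOn y'' (Set.Icc a b) ∧
    (∃ x ∈ Set.Icc a b, y x ≠ 0) ∧
    (∀ x ∈ Set.Icc a b, -(y'' x) + q x * y x = lam * y x) ∧
    y a * Real.cos α + y' a * Real.sin α = 0 ∧
    y b * Real.cos β + y' b * Real.sin β = 0

namespace SLX

open Set

/-! ### Basic objects: continuous functions on `[a,b]`, extension, integral -/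

/-- Continuous functions on `[a,b]`. -/
abbrev X (a b : ℝ) := C(Set.Icc a b, ℝ)

/-- Constant extension of a function on `[a,b]` to the line. -/
noncomputable def ext {a b : ℝ} (hab : a < b) (g : X a b) : ℝ → ℝ := Set.IccExtend hab.le g

section basics
variable {a b : ℝ} (hab : a < b)

theorem ext_cont (g : X a b) : Continuous (ext hab g) := g.continuous.Icc_extend'

theorem ext_mem (g : X a b) {x : ℝ} (hx : x ∈ Icc a b) : ext hab g x = g ⟨x, hx⟩ :=
  Set.IccExtend_of_mem _ _ hx

theorem ext_coe (g : X a b) (x : Icc a b) : ext hab g x = g x :=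
  Set.IccExtend_val _ _ x

theorem ext_add (g h : X a b) (x : ℝ) : ext hab (g + h) x = ext hab g x + ext hab h x := rfl
theorem ext_sub (g h : X a b) (x : ℝ) : ext hab (g - h) x = ext hab g x - ext hab h x := rfl
theorem ext_neg (g : X a b) (x : ℝ) : ext hab (-g) x = - ext hab g x := rfl
theorem ext_mul (g h : X a b) (x : ℝ) : ext hab (g * h) x = ext hab g x * ext hab h x := rfl
theorem ext_smul (c : ℝ) (h : X a b) (x : ℝ) : ext hab (c • h) x = c * ext hab h x := rfl
theorem ext_zero (x : ℝ) : ext hab (0 : X a b) x = 0 := rfl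

theorem abs_ext_le (g : X a b) (x : ℝ) : |ext hab g x| ≤ ‖g‖ := by
  have := g.norm_coe_le_norm (Set.projIcc a b hab.le x)
  simpa [ext, Set.IccExtend] using this

/-- The integral over `[a,b]`, as a continuous linear functional. -/
noncomputable def I : X a b →L[ℝ] ℝ :=
  LinearMap.mkContinuous
    { toFun := fun g => ∫ x in a..b, ext hab g x
      map_add' := by
        intro g h
        simp only [ext_add]
        exact intervalIntegral.integral_add ((ext_cont hab g).intervalIntegrable _ _)
          ((ext_cont hab h).intervalIntegrable _ _)
      map_smul' := by
        intro c h
        simp only [ext_smul, intervalIntegral.integral_const_mul, smul_eq_mul, RingHom.id_apply] }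
    (b - a) (by
      intro g
      have := intervalIntegral.norm_integral_le_of_norm_le_const (a := a) (b := b)
        (f := ext hab g) (C := ‖g‖) (fun x _ => abs_ext_le hab g x)
      rw [abs_of_pos (sub_pos.2 hab)] at this
      simpa [mul_comm] using this)

theorem I_apply (g : X a b) : I hab g = ∫ x in a..b, ext hab g x := rfl

theorem I_nonneg {g : X a b} (h : ∀ x, 0 ≤ g x) : 0 ≤ I hab g := by
  rw [I_apply]
  exact intervalIntegral.integral_nonneg_of_forall hab.le (fun _ => h _)

theorem I_mono {g h : X a b} (H : ∀ x, g x ≤ h x) : I hab g ≤ I hab h := by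
  have := I_nonneg hab (g := h - g) (fun x => by simpa using H x)
  rw [map_sub] at this; linarith

theorem I_sq_pos {g : X a b} (h : g ≠ 0) : 0 < I hab (g * g) := by
  rw [I_apply]
  obtain ⟨x, hx⟩ : ∃ x, g x ≠ 0 := by
    by_contra hc; push Not at hc; exact h (ContinuousMap.ext hc)
  refine intervalIntegral.integral_pos hab (ext_cont hab _).continuousOn
    (fun x _ => by rw [ext_mul]; exact mul_self_nonneg _) ⟨x, x.2, ?_⟩
  rw [ext_coe]; exact mul_self_pos.2 hx

theorem I_sq_nonneg (g : X a b) : 0 ≤ I hab (g * g) :=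
  I_nonneg hab (fun _ => mul_self_nonneg _)

theorem abs_I_le (g : X a b) : |I hab g| ≤ (b - a) * ‖g‖ :=
  (I hab).le_of_opNorm_le (LinearMap.mkContinuous_norm_le _ (sub_pos.2 hab).le _) g

/-- Cauchy–Schwarz. -/
theorem I_cs (g h : X a b) : (I hab (g * h)) ^ 2 ≤ I hab (g * g) * I hab (h * h) := by
  have key : ∀ t : ℝ, 0 ≤ I hab (h * h) * (t * t) + (2 * I hab (g * h)) * t + I hab (g * g) := by
    intro t
    have := I_sq_nonneg hab (g + t • h)
    have e : (g + t • h) * (g + t • h) = g * g + (2 * t) • (g * h) + (t * t) • (h * h) := by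
      ext x; simp; ring
    rw [e] at this
    simp only [map_add, map_smul, smul_eq_mul] at this
    linarith
  have := discrim_le_zero key
  unfold discrim at this
  nlinarith

/-- `u` is in the domain of the Sturm–Liouville operator and `u'' = w`. -/
def Dom (α β : ℝ) (u w : X a b) : Prop :=
  ∃ U' : ℝ → ℝ,
    (∀ x ∈ Icc a b, HasDerivWithinAt (ext hab u) (U' x) (Icc a b) x) ∧
    (∀ x ∈ Icc a b, HasDerivWithinAt U' (ext hab w x) (Icc a b) x) ∧
    ext hab u a * Real.cos α + U' a * Real.sin α = 0 ∧
    ext hab u b * Real.cos β + U' b * Real.sin β = 0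

/-- two solutions of the same boundary condition have vanishing Wronskian there -/
theorem wronsk_zero {α u u' v v' : ℝ} (h1 : u * Real.cos α + u' * Real.sin α = 0)
    (h2 : v * Real.cos α + v' * Real.sin α = 0) : u * v' - u' * v = 0 := by
  have h3 := Real.sin_sq_add_cos_sq α
  have e1 : (u * v' - u' * v) * Real.cos α = 0 := by linear_combination v' * h1 - u' * h2
  have e2 : (u * v' - u' * v) * Real.sin α = 0 := by linear_combination u * h2 - v * h1
  linear_combination (-(u * v' - u' * v)) * h3 + Real.sin α * e2 + Real.cos α * e1

/-- Fundamental theorem of calculus on `[a,b]` with one-sided derivatives. -/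
theorem ftc {F f : ℝ → ℝ} {c d : ℝ} (hcd : c ≤ d)
    (hF : ∀ x ∈ Icc c d, HasDerivWithinAt F (f x) (Icc c d) x)
    (hf : ContinuousOn f (Icc c d)) : ∫ x in c..d, f x = F d - F c := by
  refine intervalIntegral.integral_eq_sub_of_hasDeriv_right_of_le hcd
    (fun x hx => (hF x hx).continuousWithinAt) (fun x hx => ?_) ?_
  · exact ((hF x (Ioo_subset_Icc_self hx)).hasDerivAt (Icc_mem_nhds hx.1 hx.2)).hasDerivWithinAt
  · rw [← uIcc_of_le hcd] at hf; exact hf.intervalIntegrable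

/-- Lagrange identity / symmetry. -/
theorem lagrange {α β : ℝ} {u w v z : X a b} (h1 : Dom hab α β u w) (h2 : Dom hab α β v z) :
    I hab (w * v) = I hab (u * z) := by
  obtain ⟨U', hu1, hu2, hua, hub⟩ := h1
  obtain ⟨V', hv1, hv2, hva, hvb⟩ := h2
  have key := ftc (F := fun x => ext hab u x * V' x - U' x * ext hab v x)
    (f := fun x => ext hab (u * z - w * v) x) hab.le (fun x hx => by
      have := ((hu1 x hx).mul (hv2 x hx)).sub ((hu2 x hx).mul (hv1 x hx))
      refine this.congr_deriv ?_
      simp only [ext_sub, ext_mul]; ring) (ext_cont hab _).continuousOn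
  rw [← I_apply, map_sub] at key
  have := wronsk_zero hua hva
  have := wronsk_zero hub hvb
  linarith

/-- A domain element solving the eigenvalue equation is an eigenfunction. -/
theorem eig_of_dom {α β lam : ℝ} {q : ℝ → ℝ} {q' w : X a b} (hq : ∀ x ∈ Icc a b, ext hab q' x = q x)
    (hw : w ≠ 0) (h : Dom hab α β w (q' * w - lam • w)) :
    IsSLEigenpair a b q α β lam (ext hab w) := by
  obtain ⟨U', h1, h2, h3, h4⟩ := h
  refine ⟨U', ext hab (q' * w - lam • w), h1, h2, (ext_cont hab _).continuousOn, ?_, ?_, h3, h4⟩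
  · obtain ⟨x, hx⟩ : ∃ x, w x ≠ 0 := by
      by_contra hc; push Not at hc; exact hw (ContinuousMap.ext hc)
    exact ⟨x, x.2, by rwa [ext_coe]⟩
  · intro x hx
    rw [ext_sub, ext_mul, ext_smul, hq x hx]; ring

/-- An eigenfunction, restricted to `[a,b]`, is a domain element. -/
theorem dom_of_eig {α β lam : ℝ} {q y : ℝ → ℝ} {q' : X a b} (hq : ∀ x ∈ Icc a b, ext hab q' x = q x)
    (h : IsSLEigenpair a b q α β lam y) :
    ∃ w : X a b, (∀ x ∈ Icc a b, ext hab w x = y x) ∧ w ≠ 0 ∧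
      Dom hab α β w (q' * w - lam • w) := by
  obtain ⟨y', y'', h1, h2, h3, ⟨x0, hx0, hne⟩, h5, h6, h7⟩ := h
  have hc : ContinuousOn y (Icc a b) := fun x hx => (h1 x hx).continuousWithinAt
  refine ⟨⟨(Icc a b).domRestrict y, hc.domRestrict⟩, ?_, ?_, y', ?_, ?_, ?_, ?_⟩
  · intro x hx; rw [ext_mem hab _ hx]; rfl
  · intro h0
    have : (⟨(Icc a b).domRestrict y, hc.domRestrict⟩ : X a b) ⟨x0, hx0⟩ = 0 := by rw [h0]; rfl
    exact hne this
  · intro x hx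
    refine (h1 x hx).congr (fun z hz => ?_) ?_ <;> rw [ext_mem hab _ (by assumption)] <;> rfl
  · intro x hx
    refine (h2 x hx).congr_deriv ?_
    rw [ext_sub, ext_mul, ext_smul, hq x hx, ext_mem hab _ hx]
    have := h5 x hx
    change y'' x = q x * y x - lam * y x
    linarith
  · rw [ext_mem hab _ (left_mem_Icc.2 hab.le)]; exact h6
  · rw [ext_mem hab _ (right_mem_Icc.2 hab.le)]; exact h7

/-- Uniqueness for the initial value problem. -/
theorem ivp_unique (hab : a < b) {z z' p : ℝ → ℝ} (h1 : ∀ x ∈ Icc a b, HasDerivWithinAt z (z' x) (Icc a b) x)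
    (h2 : ∀ x ∈ Icc a b, HasDerivWithinAt z' (p x * z x) (Icc a b) x)
    {K : ℝ} (hK : ∀ x ∈ Icc a b, |p x| ≤ K) (h3 : z a = 0) (h4 : z' a = 0) :
    ∀ x ∈ Icc a b, z x = 0 := by
  have hd : ∀ x ∈ Icc a b, HasDerivWithinAt
      (fun x => (z x ^ 2 + z' x ^ 2) * Real.exp (-(1 + K) * x))
      ((2 * z x * z' x * (1 + p x) - (1 + K) * (z x ^ 2 + z' x ^ 2)) * Real.exp (-(1 + K) * x))
      (Icc a b) x := by
    intro x hx
    have e1 : HasDerivAt (fun x : ℝ => Real.exp (-(1 + K) * x))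
        (Real.exp (-(1 + K) * x) * (-(1 + K) * 1)) x := ((hasDerivAt_id x).const_mul _).exp
    have := (((h1 x hx).pow 2).add ((h2 x hx).pow 2)).mul e1.hasDerivWithinAt
    refine this.congr_deriv ?_
    simp; ring
  have anti : AntitoneOn (fun x => (z x ^ 2 + z' x ^ 2) * Real.exp (-(1 + K) * x)) (Icc a b) := by
    refine antitoneOn_of_deriv_nonpos (convex_Icc a b)
      (fun x hx => (hd x hx).continuousWithinAt) ?_ ?_
    · intro x hx; rw [interior_Icc] at hx
      exact ((hd x (Ioo_subset_Icc_self hx)).hasDerivAt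
        (Icc_mem_nhds hx.1 hx.2)).differentiableAt.differentiableWithinAt
    · intro x hx; rw [interior_Icc] at hx
      rw [((hd x (Ioo_subset_Icc_self hx)).hasDerivAt (Icc_mem_nhds hx.1 hx.2)).deriv]
      refine mul_nonpos_of_nonpos_of_nonneg ?_ (Real.exp_pos _).le
      have hp := abs_le.1 (hK x (Ioo_subset_Icc_self hx))
      have hA : 2 * z x * z' x ≤ z x ^ 2 + z' x ^ 2 := by nlinarith [sq_nonneg (z x - z' x)]
      have hB : -(2 * z x * z' x) ≤ z x ^ 2 + z' x ^ 2 := by nlinarith [sq_nonneg (z x + z' x)]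
      have hK1 : |1 + p x| ≤ 1 + K := abs_le.2 ⟨by linarith, by linarith⟩
      have : 2 * z x * z' x * (1 + p x) ≤ |2 * z x * z' x| * |1 + p x| := by
        rw [← abs_mul]; exact le_abs_self _
      have h6 : |2 * z x * z' x| ≤ z x ^ 2 + z' x ^ 2 := abs_le.2 ⟨by linarith, hA⟩
      have := mul_le_mul h6 hK1 (abs_nonneg _) (by positivity)
      linarith
  intro x hx
  have := anti (left_mem_Icc.2 hab.le) hx hx.1
  simp only [h3, h4] at this
  have h0 : z x ^ 2 + z' x ^ 2 ≤ 0 := by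
    by_contra hc
    push Not at hc
    have := mul_pos hc (Real.exp_pos (-(1 + K) * x))
    norm_num at *
    linarith
  have : z x ^ 2 = 0 := by nlinarith [sq_nonneg (z x), sq_nonneg (z' x)]
  exact pow_eq_zero_iff (two_ne_zero) |>.1 this

/-- Simplicity of eigenvalues. -/
theorem simple {α β lam : ℝ} {q u v : X a b} (hu : Dom hab α β u (q * u - lam • u))
    (hv : Dom hab α β v (q * v - lam • v)) (hv0 : v ≠ 0) : ∃ c : ℝ, u = c • v := by
  obtain ⟨U', hu1, hu2, hua, -⟩ := hu
  obtain ⟨V', hv1, hv2, hva, -⟩ := hv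
  have hmem := left_mem_Icc.2 hab.le
  have comb : ∀ c d : ℝ, c * ext hab u a + d * ext hab v a = 0 → c * U' a + d * V' a = 0 →
      c • u + d • v = 0 := by
    intro c d hc hd
    have := ivp_unique hab (z := fun x => c * ext hab u x + d * ext hab v x)
      (z' := fun x => c * U' x + d * V' x) (p := fun x => ext hab q x - lam)
      (K := ‖q‖ + |lam|) (fun x hx => ((hu1 x hx).const_mul c).add ((hv1 x hx).const_mul d))
      (fun x hx => (((hu2 x hx).const_mul c).add ((hv2 x hx).const_mul d)).congr_deriv (by
        simp only [ext_sub, ext_mul, ext_smul]; ring))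
      (fun x hx => (abs_sub _ _).trans (by gcongr; exact abs_ext_le hab q x)) hc hd
    ext x
    have := this x x.2
    simpa [ext_coe] using this
  have hW := wronsk_zero hua hva
  by_cases hva0 : ext hab v a = 0 ∧ V' a = 0
  · exfalso
    have := comb 0 1 (by simp [hva0]) (by simp [hva0])
    simp at this; exact hv0 this
  · rcases not_and_or.1 hva0 with h | h
    · refine ⟨ext hab u a / ext hab v a, ?_⟩
      have := comb 1 (-(ext hab u a / ext hab v a)) (by field_simp; ring) (by
        field_simp; linarith)
      rw [one_smul, neg_smul, ← sub_eq_add_neg, sub_eq_zero] at this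
      exact this
    · refine ⟨U' a / V' a, ?_⟩
      have := comb 1 (-(U' a / V' a)) (by field_simp; linarith) (by field_simp; ring)
      rw [one_smul, neg_smul, ← sub_eq_add_neg, sub_eq_zero] at this
      exact this

end basics
end SLX

namespace SLX

open Set

/-! ### The free resolvent -/
section free
variable {a b : ℝ} (hab : a < b)

noncomputable def E1 (κ : ℝ) (g : X a b) (x : ℝ) : ℝ :=
  ∫ t in a..x, Real.exp (-κ * (x - t)) * ext hab g t

noncomputable def E2 (κ : ℝ) (g : X a b) (x : ℝ) : ℝ :=
  ∫ t in x..b, Real.exp (-κ * (t - x)) * ext hab g t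

theorem E1_deriv (κ : ℝ) (g : X a b) (x : ℝ) :
    HasDerivAt (E1 hab κ g) (-κ * E1 hab κ g x + ext hab g x) x := by
  have e : E1 hab κ g = fun x => Real.exp (-κ * x) * ∫ t in a..x, Real.exp (κ * t) * ext hab g t := by
    funext x
    rw [E1, ← intervalIntegral.integral_const_mul]
    congr 1; funext t
    rw [← mul_assoc, ← Real.exp_add]; ring_nf
  have hc : Continuous fun t => Real.exp (κ * t) * ext hab g t := by
    have := ext_cont hab g; fun_prop
  have h1 : HasDerivAt (fun x : ℝ => Real.exp (-κ * x)) (Real.exp (-κ * x) * (-κ * 1)) x :=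
    ((hasDerivAt_id x).const_mul _).exp
  have h2 := intervalIntegral.integral_hasDerivAt_right (hc.intervalIntegrable a x)
    (hc.stronglyMeasurableAtFilter _ _) hc.continuousAt
  have h3 := h1.mul h2
  rw [e]
  refine h3.congr_deriv ?_
  have : Real.exp (-κ * x) * Real.exp (κ * x) = 1 := by rw [← Real.exp_add]; simp
  linear_combination ext hab g x * this

theorem E2_deriv (κ : ℝ) (g : X a b) (x : ℝ) :
    HasDerivAt (E2 hab κ g) (κ * E2 hab κ g x - ext hab g x) x := by
  have e : E2 hab κ g = fun x => Real.exp (κ * x) * ∫ t in x..b, Real.exp (-κ * t) * ext hab g t := by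
    funext x
    rw [E2, ← intervalIntegral.integral_const_mul]
    congr 1; funext t
    rw [← mul_assoc, ← Real.exp_add]; ring_nf
  have hc : Continuous fun t => Real.exp (-κ * t) * ext hab g t := by
    have := ext_cont hab g; fun_prop
  have h1 : HasDerivAt (fun x : ℝ => Real.exp (κ * x)) (Real.exp (κ * x) * (κ * 1)) x :=
    ((hasDerivAt_id x).const_mul _).exp
  have h2 := intervalIntegral.integral_hasDerivAt_left (hc.intervalIntegrable x b)
    (hc.stronglyMeasurableAtFilter _ _) hc.continuousAt
  have h3 := h1.mul h2
  rw [e]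
  refine h3.congr_deriv ?_
  have : Real.exp (κ * x) * Real.exp (-κ * x) = 1 := by rw [← Real.exp_add]; simp
  linear_combination -ext hab g x * this

theorem E1_cont (κ : ℝ) (g : X a b) (x : ℝ) :
    Continuous fun t => Real.exp (-κ * (x - t)) * ext hab g t := by
  have := ext_cont hab g; fun_prop

theorem E2_cont (κ : ℝ) (g : X a b) (x : ℝ) :
    Continuous fun t => Real.exp (-κ * (t - x)) * ext hab g t := by
  have := ext_cont hab g; fun_prop

theorem E1_add (κ : ℝ) (g h : X a b) (x : ℝ) :
    E1 hab κ (g + h) x = E1 hab κ g x + E1 hab κ h x := by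
  rw [E1, E1, E1, ← intervalIntegral.integral_add ((E1_cont hab κ g x).intervalIntegrable _ _)
    ((E1_cont hab κ h x).intervalIntegrable _ _)]
  congr 1; funext t; rw [ext_add]; ring

theorem E2_add (κ : ℝ) (g h : X a b) (x : ℝ) :
    E2 hab κ (g + h) x = E2 hab κ g x + E2 hab κ h x := by
  rw [E2, E2, E2, ← intervalIntegral.integral_add ((E2_cont hab κ g x).intervalIntegrable _ _)
    ((E2_cont hab κ h x).intervalIntegrable _ _)]
  congr 1; funext t; rw [ext_add]; ring

theorem E1_smul (κ c : ℝ) (g : X a b) (x : ℝ) :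
    E1 hab κ (c • g) x = c * E1 hab κ g x := by
  rw [E1, E1, ← intervalIntegral.integral_const_mul]
  congr 1; funext t; rw [ext_smul]; ring

theorem E2_smul (κ c : ℝ) (g : X a b) (x : ℝ) :
    E2 hab κ (c • g) x = c * E2 hab κ g x := by
  rw [E2, E2, ← intervalIntegral.integral_const_mul]
  congr 1; funext t; rw [ext_smul]; ring

theorem int_exp1 {κ : ℝ} (hκ : κ ≠ 0) (c x : ℝ) :
    ∫ t in c..x, Real.exp (-κ * (x - t)) = (1 - Real.exp (-κ * (x - c))) / κ := by
  rw [intervalIntegral.integral_eq_sub_of_hasDerivAt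
    (f := fun t => Real.exp (-κ * (x - t)) / κ) (fun t _ => ?_)
    ((by fun_prop : Continuous fun t => Real.exp (-κ * (x - t))).intervalIntegrable _ _)]
  · simp [sub_div]
  · have := (((hasDerivAt_id t).const_sub x).const_mul (-κ)).exp.div_const κ
    refine this.congr_deriv ?_
    field_simp; simp

theorem int_exp2 {κ : ℝ} (hκ : κ ≠ 0) (c x : ℝ) :
    ∫ t in x..c, Real.exp (-κ * (t - x)) = (1 - Real.exp (-κ * (c - x))) / κ := by
  rw [intervalIntegral.integral_eq_sub_of_hasDerivAt
    (f := fun t => -Real.exp (-κ * (t - x)) / κ) (fun t _ => ?_)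
    ((by fun_prop : Continuous fun t => Real.exp (-κ * (t - x))).intervalIntegrable _ _)]
  · simp; ring
  · have := (((hasDerivAt_id t).sub_const x).const_mul (-κ)).exp.neg.div_const κ
    refine this.congr_deriv ?_
    field_simp; simp

theorem N1_le (g : X a b) {c d : ℝ} (hc : a ≤ c) (hcd : c ≤ d) (hd : d ≤ b) :
    ∫ t in c..d, |ext hab g t| ≤ I hab |g| := by
  rw [I_apply]
  have e : (fun x => ext hab |g| x) = fun x => |ext hab g x| := rfl
  have hcont : Continuous fun x => |ext hab g x| := (ext_cont hab g).abs
  change _ ≤ ∫ x in a..b, |ext hab g x|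
  exact intervalIntegral.integral_mono_interval hc hcd hd (Filter.Eventually.of_forall
    (fun x => abs_nonneg _)) (hcont.intervalIntegrable _ _)

theorem int_le {f g : ℝ → ℝ} {c d : ℝ} (hcd : c ≤ d) (hg : Continuous g)
    (h : ∀ t ∈ Ioc c d, |f t| ≤ g t) : |∫ t in c..d, f t| ≤ ∫ t in c..d, g t := by
  rw [← Real.norm_eq_abs]
  exact intervalIntegral.norm_integral_le_of_norm_le hcd (Filter.Eventually.of_forall h)
    (hg.intervalIntegrable _ _)

theorem E1_L1 {κ : ℝ} (hκ : 0 < κ) (g : X a b) {x : ℝ} (hx : x ∈ Icc a b) :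
    |E1 hab κ g x| ≤ I hab |g| := by
  refine le_trans ?_ (N1_le hab g le_rfl hx.1 hx.2)
  refine int_le hx.1 (ext_cont hab g).abs ?_
  intro t ht
  rw [abs_mul, Real.abs_exp]
  refine mul_le_of_le_one_left (abs_nonneg _) (Real.exp_le_one_iff.2 ?_)
  nlinarith [ht.2]

theorem E2_L1 {κ : ℝ} (hκ : 0 < κ) (g : X a b) {x : ℝ} (hx : x ∈ Icc a b) :
    |E2 hab κ g x| ≤ I hab |g| := by
  refine le_trans ?_ (N1_le hab g hx.1 hx.2 le_rfl)
  refine int_le hx.2 (ext_cont hab g).abs ?_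
  intro t ht
  rw [abs_mul, Real.abs_exp]
  refine mul_le_of_le_one_left (abs_nonneg _) (Real.exp_le_one_iff.2 ?_)
  nlinarith [ht.1]

/-- pointwise inequality used for local estimates -/
theorem loc_pt {κ η ε M r z : ℝ} (hκ : 0 < κ) (hε : 0 ≤ ε) (hM : 0 ≤ M) (h1 : r ≤ η → |z| ≤ ε)
    (h2 : |z| ≤ M) :
    |Real.exp (-κ * r) * z| ≤ ε * Real.exp (-κ * r) +
      M * Real.exp (-(κ / 2) * η) * Real.exp (-(κ / 2) * r) := by
  rw [abs_mul, Real.abs_exp]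
  have p1 := Real.exp_pos (-κ * r)
  by_cases h : r ≤ η
  · have : 0 ≤ M * Real.exp (-(κ / 2) * η) * Real.exp (-(κ / 2) * r) := by positivity
    nlinarith [h1 h]
  · push Not at h
    have e : Real.exp (-κ * r) ≤ Real.exp (-(κ / 2) * η) * Real.exp (-(κ / 2) * r) := by
      rw [← Real.exp_add]; apply Real.exp_le_exp.2; nlinarith
    have : Real.exp (-κ * r) * |z| ≤
        (Real.exp (-(κ / 2) * η) * Real.exp (-(κ / 2) * r)) * M :=
      mul_le_mul e h2 (abs_nonneg _) (by positivity)
    have : 0 ≤ ε * Real.exp (-κ * r) := by positivity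
    linarith

theorem E1_loc {κ : ℝ} (hκ : 0 < κ) (g : X a b) {x η ε M v : ℝ} (hx : x ∈ Icc a b)
    (hε : 0 ≤ ε) (hM : 0 ≤ M)
    (h1 : ∀ t ∈ Icc a b, |x - t| ≤ η → |ext hab g t - v| ≤ ε)
    (h2 : ∀ t ∈ Icc a b, |ext hab g t - v| ≤ M) :
    |κ * E1 hab κ g x - v * (1 - Real.exp (-κ * (x - a)))| ≤
      ε + 2 * M * Real.exp (-(κ / 2) * η) := by
  have e : κ * E1 hab κ g x - v * (1 - Real.exp (-κ * (x - a))) =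
      κ * ∫ t in a..x, Real.exp (-κ * (x - t)) * (ext hab g t - v) := by
    have : ∫ t in a..x, Real.exp (-κ * (x - t)) * (ext hab g t - v) =
        E1 hab κ g x - (∫ t in a..x, Real.exp (-κ * (x - t))) * v := by
      rw [E1, ← intervalIntegral.integral_mul_const, ← intervalIntegral.integral_sub
        ((E1_cont hab κ g x).intervalIntegrable _ _)
        ((by fun_prop : Continuous fun t => Real.exp (-κ * (x - t)) * v).intervalIntegrable _ _)]
      congr 1; funext t; ring
    rw [this, int_exp1 hκ.ne']; field_simp
  rw [e, abs_mul, abs_of_pos hκ]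
  have hb : |∫ t in a..x, Real.exp (-κ * (x - t)) * (ext hab g t - v)| ≤
      ∫ t in a..x, (ε * Real.exp (-κ * (x - t)) +
        M * Real.exp (-(κ / 2) * η) * Real.exp (-(κ / 2) * (x - t))) := by
    refine int_le hx.1 (by fun_prop) ?_
    intro t ht
    have htm : t ∈ Icc a b := ⟨ht.1.le, ht.2.trans hx.2⟩
    exact loc_pt hκ hε hM (fun h => h1 t htm (by rw [abs_of_nonneg (by linarith [ht.2])]; exact h))
      (h2 t htm)
  rw [intervalIntegral.integral_add (Continuous.intervalIntegrable (by fun_prop) _ _)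
    (Continuous.intervalIntegrable (by fun_prop) _ _), intervalIntegral.integral_const_mul,
    intervalIntegral.integral_const_mul, int_exp1 hκ.ne', int_exp1 (half_pos hκ).ne'] at hb
  have p1 := Real.exp_pos (-κ * (x - a))
  have p2 := Real.exp_pos (-(κ / 2) * (x - a))
  have p3 := Real.exp_pos (-(κ / 2) * η)
  calc _ ≤ κ * (ε * ((1 - Real.exp (-κ * (x - a))) / κ) + M * Real.exp (-(κ / 2) * η) *
        ((1 - Real.exp (-(κ / 2) * (x - a))) / (κ / 2))) := by gcongr
    _ = ε * (1 - Real.exp (-κ * (x - a))) + 2 * M * Real.exp (-(κ / 2) * η) *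
        (1 - Real.exp (-(κ / 2) * (x - a))) := by field_simp
    _ ≤ ε * 1 + 2 * M * Real.exp (-(κ / 2) * η) * 1 := by gcongr <;> linarith
    _ = _ := by ring

theorem E2_loc {κ : ℝ} (hκ : 0 < κ) (g : X a b) {x η ε M v : ℝ} (hx : x ∈ Icc a b)
    (hε : 0 ≤ ε) (hM : 0 ≤ M)
    (h1 : ∀ t ∈ Icc a b, |x - t| ≤ η → |ext hab g t - v| ≤ ε)
    (h2 : ∀ t ∈ Icc a b, |ext hab g t - v| ≤ M) :
    |κ * E2 hab κ g x - v * (1 - Real.exp (-κ * (b - x)))| ≤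
      ε + 2 * M * Real.exp (-(κ / 2) * η) := by
  have e : κ * E2 hab κ g x - v * (1 - Real.exp (-κ * (b - x))) =
      κ * ∫ t in x..b, Real.exp (-κ * (t - x)) * (ext hab g t - v) := by
    have : ∫ t in x..b, Real.exp (-κ * (t - x)) * (ext hab g t - v) =
        E2 hab κ g x - (∫ t in x..b, Real.exp (-κ * (t - x))) * v := by
      rw [E2, ← intervalIntegral.integral_mul_const, ← intervalIntegral.integral_sub
        ((E2_cont hab κ g x).intervalIntegrable _ _)
        ((by fun_prop : Continuous fun t => Real.exp (-κ * (t - x)) * v).intervalIntegrable _ _)]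
      congr 1; funext t; ring
    rw [this, int_exp2 hκ.ne']; field_simp
  rw [e, abs_mul, abs_of_pos hκ]
  have hb : |∫ t in x..b, Real.exp (-κ * (t - x)) * (ext hab g t - v)| ≤
      ∫ t in x..b, (ε * Real.exp (-κ * (t - x)) +
        M * Real.exp (-(κ / 2) * η) * Real.exp (-(κ / 2) * (t - x))) := by
    refine int_le hx.2 (by fun_prop) ?_
    intro t ht
    have htm : t ∈ Icc a b := ⟨hx.1.trans ht.1.le, ht.2⟩
    exact loc_pt hκ hε hM (fun h => h1 t htm (by
      rw [abs_sub_comm, abs_of_nonneg (by linarith [ht.1])]; exact h)) (h2 t htm)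
  rw [intervalIntegral.integral_add (Continuous.intervalIntegrable (by fun_prop) _ _)
    (Continuous.intervalIntegrable (by fun_prop) _ _), intervalIntegral.integral_const_mul,
    intervalIntegral.integral_const_mul, int_exp2 hκ.ne', int_exp2 (half_pos hκ).ne'] at hb
  have p1 := Real.exp_pos (-κ * (b - x))
  have p2 := Real.exp_pos (-(κ / 2) * (b - x))
  have p3 := Real.exp_pos (-(κ / 2) * η)
  calc _ ≤ κ * (ε * ((1 - Real.exp (-κ * (b - x))) / κ) + M * Real.exp (-(κ / 2) * η) *
        ((1 - Real.exp (-(κ / 2) * (b - x))) / (κ / 2))) := by gcongr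
    _ = ε * (1 - Real.exp (-κ * (b - x))) + 2 * M * Real.exp (-(κ / 2) * η) *
        (1 - Real.exp (-(κ / 2) * (b - x))) := by field_simp
    _ ≤ ε * 1 + 2 * M * Real.exp (-(κ / 2) * η) * 1 := by gcongr <;> linarith
    _ = _ := by ring

theorem E1_sup {κ : ℝ} (hκ : 0 < κ) (g : X a b) {x : ℝ} (hx : x ∈ Icc a b) :
    |E1 hab κ g x| ≤ ‖g‖ / κ := by
  have hb : |E1 hab κ g x| ≤ ∫ t in a..x, Real.exp (-κ * (x - t)) * ‖g‖ := by
    refine int_le hx.1 (by fun_prop) ?_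
    intro t _
    rw [abs_mul, Real.abs_exp]
    gcongr; exact abs_ext_le hab g t
  rw [intervalIntegral.integral_mul_const, int_exp1 hκ.ne'] at hb
  refine hb.trans ?_
  rw [div_mul_eq_mul_div]
  gcongr
  refine mul_le_of_le_one_left (norm_nonneg _) ?_
  linarith [Real.exp_pos (-κ * (x - a))]

theorem E2_sup {κ : ℝ} (hκ : 0 < κ) (g : X a b) {x : ℝ} (hx : x ∈ Icc a b) :
    |E2 hab κ g x| ≤ ‖g‖ / κ := by
  have hb : |E2 hab κ g x| ≤ ∫ t in x..b, Real.exp (-κ * (t - x)) * ‖g‖ := by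
    refine int_le hx.2 (by fun_prop) ?_
    intro t _
    rw [abs_mul, Real.abs_exp]
    gcongr; exact abs_ext_le hab g t
  rw [intervalIntegral.integral_mul_const, int_exp2 hκ.ne'] at hb
  refine hb.trans ?_
  rw [div_mul_eq_mul_div]
  gcongr
  refine mul_le_of_le_one_left (norm_nonneg _) ?_
  linarith [Real.exp_pos (-κ * (b - x))]

end free
end SLX

namespace SLX

open Set

section freeR
variable {a b : ℝ} (hab : a < b)

theorem coef_large (α : ℝ) : ∃ κ0 > 0, ∀ κ ≥ κ0,
    (Real.cos α - κ * Real.sin α ≠ 0 ∧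
      |Real.cos α + κ * Real.sin α| ≤ 2 * |Real.cos α - κ * Real.sin α|) ∧
    (Real.cos α + κ * Real.sin α ≠ 0 ∧
      |Real.cos α - κ * Real.sin α| ≤ 2 * |Real.cos α + κ * Real.sin α|) := by
  by_cases hs : Real.sin α = 0
  · have hc : Real.cos α ≠ 0 := by
      intro h; have := Real.sin_sq_add_cos_sq α; rw [hs, h] at this; norm_num at this
    refine ⟨1, one_pos, fun κ _ => ?_⟩
    have := abs_nonneg (Real.cos α)
    simp only [hs, mul_zero, add_zero, sub_zero]
    exact ⟨⟨hc, by linarith⟩, hc, by linarith⟩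
  · have hs' : 0 < |Real.sin α| := abs_pos.2 hs
    refine ⟨3 / |Real.sin α|, by positivity, fun κ hκ => ?_⟩
    have hκ0 : 0 < κ := lt_of_lt_of_le (by positivity) hκ
    have h3 : 3 ≤ |κ * Real.sin α| := by
      rw [abs_mul, abs_of_pos hκ0]; exact (div_le_iff₀ hs').1 hκ
    have h1 : |Real.cos α| ≤ 1 := Real.abs_cos_le_one α
    have a1 := abs_sub_abs_le_abs_sub (κ * Real.sin α) (Real.cos α)
    have a2 := abs_add_le (Real.cos α) (κ * Real.sin α)
    have a3 := abs_sub (Real.cos α) (κ * Real.sin α)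
    have a4 := abs_sub_abs_le_abs_sub (κ * Real.sin α) (-Real.cos α)
    rw [abs_neg, sub_neg_eq_add, add_comm (κ * Real.sin α) (Real.cos α)] at a4
    rw [abs_sub_comm (κ * Real.sin α)] at a1
    exact ⟨⟨abs_pos.1 (by linarith), by linarith⟩, abs_pos.1 (by linarith), by linarith⟩

/-- solving the 2×2 system for the boundary terms -/
noncomputable def cA (ρ σ e p r : ℝ) : ℝ := (-ρ * p + ρ * σ * e * r) / (1 - ρ * σ * e ^ 2)

theorem cD_pos {ρ σ e : ℝ} (hρ : |ρ| ≤ 2) (hσ : |σ| ≤ 2) (he0 : 0 ≤ e) (he : e ≤ 1 / 4) :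
    3 / 4 ≤ 1 - ρ * σ * e ^ 2 := by
  have h1 : |ρ * σ| ≤ 4 := by
    rw [abs_mul]; nlinarith [abs_nonneg ρ, abs_nonneg σ]
  have h2 : e ^ 2 ≤ 1 / 16 := by nlinarith
  have h3 := le_abs_self (ρ * σ)
  nlinarith [sq_nonneg e]

theorem cA_eq {ρ σ e p r : ℝ} (hD : 1 - ρ * σ * e ^ 2 ≠ 0) :
    cA ρ σ e p r + ρ * (p + e * cA σ ρ e r p) = 0 := by
  unfold cA
  rw [mul_comm σ ρ]
  field_simp
  ring

theorem cA_bound {ρ σ e p r m : ℝ} (hρ : |ρ| ≤ 2) (hσ : |σ| ≤ 2) (he0 : 0 ≤ e) (he : e ≤ 1 / 4)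
    (hp : |p| ≤ m) (hr : |r| ≤ m) : |cA ρ σ e p r| ≤ 4 * m := by
  have hD := cD_pos hρ hσ he0 he
  unfold cA
  rw [abs_div, abs_of_pos (by linarith : 0 < 1 - ρ * σ * e ^ 2), div_le_iff₀ (by linarith)]
  have hm : 0 ≤ m := (abs_nonneg _).trans hp
  have h1 : |-ρ * p| ≤ 2 * m := by
    rw [abs_mul, abs_neg]; exact mul_le_mul hρ hp (abs_nonneg _) (by norm_num)
  have h2 : |ρ * σ * e * r| ≤ 2 * 2 * (1 / 4) * m := by
    rw [abs_mul, abs_mul, abs_mul, abs_of_nonneg he0]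
    gcongr
  have := abs_add_le (-ρ * p) (ρ * σ * e * r)
  nlinarith

set_option maxHeartbeats 2000000 in
/-- The free resolvent `(-D² + κ²)⁻¹` with the given boundary conditions. -/
theorem exists_R0 (α β : ℝ) : ∃ κ0 > 0, ∀ κ ≥ κ0, ∃ R : X a b →L[ℝ] X a b,
    (∀ g, Dom hab α β (R g) ((κ ^ 2) • R g - g)) ∧
    (∀ g, ‖R g‖ ≤ 5 / κ ^ 2 * ‖g‖) ∧
    (∃ C, 0 ≤ C ∧ ∀ g, ‖R g‖ ≤ C * I hab |g| ∧
      ∀ x y : Icc a b, |R g x - R g y| ≤ C * I hab |g| * |(x : ℝ) - y|) ∧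
    (∀ (g : X a b) (v ε η : ℝ) (x : Icc a b), 0 ≤ ε → a + η ≤ x → x ≤ b - η → 0 ≤ η →
      (∀ t ∈ Icc a b, |x - t| ≤ η → |ext hab g t - v| ≤ ε) →
      |κ ^ 2 * R g x - v| ≤ ε + 6 * (‖g‖ + |v|) * Real.exp (-(κ / 2) * η)) := by
  obtain ⟨κ1, hκ1, H1⟩ := coef_large α
  obtain ⟨κ2, hκ2, H2⟩ := coef_large β
  have hL : 0 < b - a := sub_pos.2 hab
  refine ⟨max (max κ1 κ2) (4 / (b - a)), lt_of_lt_of_le hκ1 (by simp), fun κ hκ => ?_⟩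
  have hk1 : κ1 ≤ κ := le_trans (by simp) hκ
  have hk2 : κ2 ≤ κ := le_trans (by simp) hκ
  have hk3 : 4 / (b - a) ≤ κ := le_trans (by simp) hκ
  have hκ0 : 0 < κ := lt_of_lt_of_le hκ1 hk1
  obtain ⟨⟨ha0, ha1⟩, -⟩ := H1 κ hk1
  obtain ⟨-, ⟨hb0, hb1⟩⟩ := H2 κ hk2
  set ρ := (Real.cos α + κ * Real.sin α) / (Real.cos α - κ * Real.sin α) with hρdef
  set σ := (Real.cos β - κ * Real.sin β) / (Real.cos β + κ * Real.sin β) with hσdef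
  have hρ : |ρ| ≤ 2 := by rw [hρdef, abs_div, div_le_iff₀ (abs_pos.2 ha0)]; exact ha1
  have hσ : |σ| ≤ 2 := by rw [hσdef, abs_div, div_le_iff₀ (abs_pos.2 hb0)]; exact hb1
  set e := Real.exp (-κ * (b - a)) with hedef
  have he0 : 0 < e := Real.exp_pos _
  have he : e ≤ 1 / 4 := by
    have h4 : 4 ≤ κ * (b - a) := (div_le_iff₀ hL).1 hk3
    have h5 := Real.add_one_le_exp (κ * (b - a))
    rw [hedef, neg_mul, Real.exp_neg, one_div]
    exact inv_anti₀ (by norm_num) (by linarith)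
  have hD := cD_pos hρ hσ he0.le he
  have hD' := cD_pos hσ hρ he0.le he
  -- boundary data
  set p : X a b → ℝ := fun g => E2 hab κ g a / (2 * κ) with hp
  set r : X a b → ℝ := fun g => E1 hab κ g b / (2 * κ) with hr
  set A : X a b → ℝ := fun g => cA ρ σ e (p g) (r g) with hA
  set B : X a b → ℝ := fun g => cA σ ρ e (r g) (p g) with hB
  set u : X a b → ℝ → ℝ := fun g x => (E1 hab κ g x + E2 hab κ g x) / (2 * κ) +
    A g * Real.exp (-κ * (x - a)) + B g * Real.exp (-κ * (b - x)) with hu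
  set u' : X a b → ℝ → ℝ := fun g x => (-E1 hab κ g x + E2 hab κ g x) / 2 -
    κ * A g * Real.exp (-κ * (x - a)) + κ * B g * Real.exp (-κ * (b - x)) with hu'
  have de1 : ∀ x, HasDerivAt (fun x => Real.exp (-κ * (x - a)))
      (Real.exp (-κ * (x - a)) * (-κ * 1)) x := fun x =>
    (((hasDerivAt_id x).sub_const a).const_mul (-κ)).exp
  have de2 : ∀ x, HasDerivAt (fun x => Real.exp (-κ * (b - x)))
      (Real.exp (-κ * (b - x)) * (-κ * -1)) x := fun x =>
    (((hasDerivAt_id x).const_sub b).const_mul (-κ)).exp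
  have du : ∀ g x, HasDerivAt (u g) (u' g x) x := by
    intro g x
    refine (((((E1_deriv hab κ g x).add (E2_deriv hab κ g x)).div_const (2 * κ)).add
      ((de1 x).const_mul (A g))).add ((de2 x).const_mul (B g))).congr_deriv ?_
    simp only [hu']; field_simp; ring
  have du' : ∀ g x, HasDerivAt (u' g) (κ ^ 2 * u g x - ext hab g x) x := by
    intro g x
    refine (((((E1_deriv hab κ g x).neg.add (E2_deriv hab κ g x)).div_const 2).sub
      ((de1 x).const_mul (κ * A g))).add ((de2 x).const_mul (κ * B g))).congr_deriv ?_
    simp only [hu]; field_simp; ring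
  have ucont : ∀ g, Continuous (u g) := fun g =>
    continuous_iff_continuousAt.2 fun x => (du g x).continuousAt
  have padd : ∀ g h, p (g + h) = p g + p h := fun g h => by simp only [hp, E2_add]; ring
  have radd : ∀ g h, r (g + h) = r g + r h := fun g h => by simp only [hr, E1_add]; ring
  have psmul : ∀ (c : ℝ) g, p (c • g) = c * p g := fun c g => by simp only [hp, E2_smul]; ring
  have rsmul : ∀ (c : ℝ) g, r (c • g) = c * r g := fun c g => by simp only [hr, E1_smul]; ring
  -- bounds
  have hleft := left_mem_Icc.2 hab.le
  have hright := right_mem_Icc.2 hab.le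
  have pb : ∀ g m, (∀ x ∈ Icc a b, |E1 hab κ g x| ≤ m) → (∀ x ∈ Icc a b, |E2 hab κ g x| ≤ m) →
      |A g| ≤ 2 * m / κ ∧ |B g| ≤ 2 * m / κ := by
    intro g m h1 h2
    have p1 : |p g| ≤ m / (2 * κ) := by
      simp only [hp]; rw [abs_div, abs_of_pos (by positivity : 0 < 2 * κ)]; gcongr; exact h2 _ hleft
    have r1 : |r g| ≤ m / (2 * κ) := by
      simp only [hr]; rw [abs_div, abs_of_pos (by positivity : 0 < 2 * κ)]; gcongr; exact h1 _ hright
    have e4 : 4 * (m / (2 * κ)) = 2 * m / κ := by field_simp; ring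
    exact ⟨e4 ▸ cA_bound hρ hσ he0.le he p1 r1, e4 ▸ cA_bound hσ hρ he0.le he r1 p1⟩
  have exp1 : ∀ x ∈ Icc a b, Real.exp (-κ * (x - a)) ≤ 1 := fun x hx =>
    Real.exp_le_one_iff.2 (by nlinarith [hx.1])
  have exp2 : ∀ x ∈ Icc a b, Real.exp (-κ * (b - x)) ≤ 1 := fun x hx =>
    Real.exp_le_one_iff.2 (by nlinarith [hx.2])
  have ub : ∀ g m, (∀ x ∈ Icc a b, |E1 hab κ g x| ≤ m) → (∀ x ∈ Icc a b, |E2 hab κ g x| ≤ m) →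
      ∀ x ∈ Icc a b, |u g x| ≤ 5 * m / κ ∧ |u' g x| ≤ 5 * m := by
    intro g m h1 h2 x hx
    obtain ⟨hAb, hBb⟩ := pb g m h1 h2
    have hm : 0 ≤ m := (abs_nonneg _).trans (h1 x hx)
    have q1 : |A g * Real.exp (-κ * (x - a))| ≤ 2 * m / κ := by
      rw [abs_mul, Real.abs_exp]
      exact (mul_le_of_le_one_right (abs_nonneg _) (exp1 x hx)).trans hAb
    have q2 : |B g * Real.exp (-κ * (b - x))| ≤ 2 * m / κ := by
      rw [abs_mul, Real.abs_exp]
      exact (mul_le_of_le_one_right (abs_nonneg _) (exp2 x hx)).trans hBb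
    have q3 : |(E1 hab κ g x + E2 hab κ g x) / (2 * κ)| ≤ m / κ := by
      rw [abs_div, abs_of_pos (by positivity : 0 < 2 * κ), div_le_div_iff₀ (by positivity) hκ0]
      have := abs_add_le (E1 hab κ g x) (E2 hab κ g x)
      nlinarith [h1 x hx, h2 x hx]
    have q4 : |(-E1 hab κ g x + E2 hab κ g x) / 2| ≤ m := by
      rw [abs_div, abs_of_pos (by norm_num : (0:ℝ) < 2), div_le_iff₀ (by norm_num)]
      have := abs_add_le (-E1 hab κ g x) (E2 hab κ g x)
      rw [abs_neg] at this
      linarith [h1 x hx, h2 x hx]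
    constructor
    · refine (abs_add_le _ _).trans ?_
      have := abs_add_le ((E1 hab κ g x + E2 hab κ g x) / (2 * κ)) (A g * Real.exp (-κ * (x - a)))
      have e5 : 5 * m / κ = m / κ + 2 * m / κ + 2 * m / κ := by ring
      linarith
    · have q1' : |κ * A g * Real.exp (-κ * (x - a))| ≤ 2 * m := by
        rw [mul_assoc, abs_mul, abs_of_pos hκ0, mul_comm]; exact (le_div_iff₀ hκ0).1 q1
      have q2' : |κ * B g * Real.exp (-κ * (b - x))| ≤ 2 * m := by
        rw [mul_assoc, abs_mul, abs_of_pos hκ0, mul_comm]; exact (le_div_iff₀ hκ0).1 q2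
      refine (abs_add_le _ _).trans ?_
      have := abs_sub ((-E1 hab κ g x + E2 hab κ g x) / 2) (κ * A g * Real.exp (-κ * (x - a)))
      linarith
  let R : X a b →L[ℝ] X a b := LinearMap.mkContinuous
    { toFun := fun g => ⟨fun x => u g x, (ucont g).comp continuous_subtype_val⟩
      map_add' := by
        intro g h
        ext x
        simp only [hu, hA, hB, cA, padd, radd, E1_add, E2_add, ContinuousMap.coe_mk,
          ContinuousMap.add_apply]
        ring
      map_smul' := by
        intro c h
        ext x
        simp only [hu, hA, hB, cA, psmul, rsmul, E1_smul, E2_smul, ContinuousMap.coe_mk,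
          ContinuousMap.smul_apply, smul_eq_mul, RingHom.id_apply]
        ring } (5 / κ ^ 2) (by
      intro g
      refine (ContinuousMap.norm_le _ (by positivity)).2 (fun x => ?_)
      have := (ub g (‖g‖ / κ) (fun x hx => E1_sup hab hκ0 g hx)
        (fun x hx => E2_sup hab hκ0 g hx) x x.2).1
      refine this.trans (le_of_eq ?_)
      field_simp)
  have hR : ∀ g (x : Icc a b), R g x = u g x := fun g x => rfl
  have hRe : ∀ g, ∀ x ∈ Icc a b, ext hab (R g) x = u g x := fun g x hx => by
    rw [ext_mem hab _ hx]; exact hR g _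
  refine ⟨R, ?_, ?_, ?_, ?_⟩
  · intro g
    refine ⟨u' g, ?_, ?_, ?_, ?_⟩
    · intro x hx
      exact (du g x).hasDerivWithinAt.congr (hRe g) (hRe g x hx)
    · intro x hx
      refine (du' g x).hasDerivWithinAt.congr_deriv ?_
      rw [ext_sub, ext_smul, hRe g x hx]
    · rw [hRe g a hleft]
      have e1a : E1 hab κ g a = 0 := by simp [E1]
      have key : A g + ρ * (p g + e * B g) = 0 := cA_eq (by linarith)
      have hpk : E2 hab κ g a = 2 * κ * p g := by simp only [hp]; field_simp
      have hρ' : ρ * (Real.cos α - κ * Real.sin α) = Real.cos α + κ * Real.sin α := by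
        rw [hρdef]; field_simp
      have v1 : u g a = p g + A g + e * B g := by
        simp only [hu, e1a, sub_self, mul_zero, Real.exp_zero]
        rw [← hedef, hpk]; field_simp; ring
      have v2 : u' g a = κ * (p g - A g + e * B g) := by
        simp only [hu', e1a, sub_self, mul_zero, Real.exp_zero]
        rw [← hedef, hpk]; ring
      rw [v1, v2]
      linear_combination (Real.cos α - κ * Real.sin α) * key - (p g + e * B g) * hρ'
    · rw [hRe g b hright]
      have e1a : E2 hab κ g b = 0 := by simp [E2]
      have key : B g + σ * (r g + e * A g) = 0 := cA_eq (by linarith)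
      have hpk : E1 hab κ g b = 2 * κ * r g := by simp only [hr]; field_simp
      have hρ' : σ * (Real.cos β + κ * Real.sin β) = Real.cos β - κ * Real.sin β := by
        rw [hσdef]; field_simp
      have v1 : u g b = r g + B g + e * A g := by
        simp only [hu, e1a, sub_self, mul_zero, Real.exp_zero]
        rw [← hedef, hpk]; field_simp; ring
      have v2 : u' g b = κ * (B g - r g - e * A g) := by
        simp only [hu', e1a, sub_self, mul_zero, Real.exp_zero]
        rw [← hedef, hpk]; ring
      rw [v1, v2]
      linear_combination (Real.cos β + κ * Real.sin β) * key - (r g + e * A g) * hρ'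
  · intro g
    exact R.le_of_opNorm_le (LinearMap.mkContinuous_norm_le _ (by positivity) _) g
  · have hN : ∀ g : X a b, 0 ≤ I hab |g| := fun g => I_nonneg hab fun x => abs_nonneg _
    refine ⟨max (5 / κ) 5, by positivity, fun g => ⟨?_, ?_⟩⟩
    · refine (ContinuousMap.norm_le _ (mul_nonneg (by positivity) (hN g))).2 (fun x => ?_)
      have := (ub g (I hab |g|) (fun x hx => E1_L1 hab hκ0 g hx)
        (fun x hx => E2_L1 hab hκ0 g hx) x x.2).1
      rw [hR]
      refine this.trans ?_
      rw [mul_div_right_comm]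
      exact mul_le_mul_of_nonneg_right (le_max_left _ _) (hN g)
    · intro x y
      have := (convex_Icc a b).norm_image_sub_le_of_norm_hasDerivWithin_le (f := u g) (f' := u' g)
        (C := 5 * I hab |g|) (fun x _ => (du g x).hasDerivWithinAt)
        (fun x hx => (ub g (I hab |g|) (fun x hx => E1_L1 hab hκ0 g hx)
        (fun x hx => E2_L1 hab hκ0 g hx) x hx).2) y.2 x.2
      rw [hR, hR]
      refine this.trans ?_
      rw [Real.norm_eq_abs]
      exact mul_le_mul_of_nonneg_right (mul_le_mul_of_nonneg_right (le_max_right _ _) (hN g))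
        (abs_nonneg _)
  · intro g v ε η x hε hxa hxb hη hloc
    have hM : 0 ≤ ‖g‖ + |v| := by positivity
    have hM2 : ∀ t ∈ Icc a b, |ext hab g t - v| ≤ ‖g‖ + |v| := fun t _ =>
      (abs_sub _ _).trans (by gcongr; exact abs_ext_le hab g t)
    have l1 := abs_le.1 (E1_loc hab hκ0 g x.2 hε hM hloc hM2)
    have l2 := abs_le.1 (E2_loc hab hκ0 g x.2 hε hM hloc hM2)
    obtain ⟨hAb, hBb⟩ := pb g (‖g‖ / κ) (fun x hx => E1_sup hab hκ0 g hx)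
        (fun x hx => E2_sup hab hκ0 g hx)
    set w := Real.exp (-(κ / 2) * η) with hw
    have x1 : Real.exp (-κ * (x - a)) ≤ w := Real.exp_le_exp.2 (by nlinarith)
    have x2 : Real.exp (-κ * (b - x)) ≤ w := Real.exp_le_exp.2 (by nlinarith)
    have w0 : 0 < w := Real.exp_pos _
    have hA2 : |κ ^ 2 * A g * Real.exp (-κ * (x - a))| ≤ 2 * ‖g‖ * w := by
      rw [abs_mul, Real.abs_exp, abs_mul, abs_of_pos (by positivity : 0 < κ ^ 2)]
      have : κ ^ 2 * |A g| ≤ 2 * ‖g‖ := by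
        calc κ ^ 2 * |A g| ≤ κ ^ 2 * (2 * (‖g‖ / κ) / κ) := by gcongr
          _ = 2 * ‖g‖ := by field_simp
      exact mul_le_mul this x1 (Real.exp_pos _).le (by positivity)
    have hB2 : |κ ^ 2 * B g * Real.exp (-κ * (b - x))| ≤ 2 * ‖g‖ * w := by
      rw [abs_mul, Real.abs_exp, abs_mul, abs_of_pos (by positivity : 0 < κ ^ 2)]
      have : κ ^ 2 * |B g| ≤ 2 * ‖g‖ := by
        calc κ ^ 2 * |B g| ≤ κ ^ 2 * (2 * (‖g‖ / κ) / κ) := by gcongr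
          _ = 2 * ‖g‖ := by field_simp
      exact mul_le_mul this x2 (Real.exp_pos _).le (by positivity)
    have hv1 : |v * Real.exp (-κ * (x - a))| ≤ |v| * w := by
      rw [abs_mul, Real.abs_exp]; gcongr
    have hv2 : |v * Real.exp (-κ * (b - x))| ≤ |v| * w := by
      rw [abs_mul, Real.abs_exp]; gcongr
    have e : κ ^ 2 * R g x - v = (κ * E1 hab κ g x - v * (1 - Real.exp (-κ * (x - a)))) / 2 +
        (κ * E2 hab κ g x - v * (1 - Real.exp (-κ * (b - x)))) / 2 -
        v * Real.exp (-κ * (x - a)) / 2 - v * Real.exp (-κ * (b - x)) / 2 +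
        κ ^ 2 * A g * Real.exp (-κ * (x - a)) + κ ^ 2 * B g * Real.exp (-κ * (b - x)) := by
      rw [hR]; simp only [hu]; field_simp; ring
    rw [e]
    have b1 := abs_le.1 hA2
    have b2 := abs_le.1 hB2
    have b3 := abs_le.1 hv1
    have b4 := abs_le.1 hv2
    have hgw : 0 ≤ ‖g‖ * w := by positivity
    have hvw : 0 ≤ |v| * w := by positivity
    exact abs_le.2 ⟨by linarith, by linarith⟩

end freeR
end SLX

namespace SLX

open Set

section fullR
variable {a b : ℝ} (hab : a < b)

set_option maxHeartbeats 1000000 in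
/-- The resolvent `(-D² + q + κ²)⁻¹` with the given boundary conditions, for large `κ`. -/
theorem exists_R (α β : ℝ) (q : X a b) : ∃ κ0 > 0, ∀ κ ≥ κ0, ∃ R : X a b →L[ℝ] X a b,
    (∀ g, Dom hab α β (R g) (q * R g + (κ ^ 2) • R g - g)) ∧
    (∀ g, ‖R g‖ ≤ 10 / κ ^ 2 * ‖g‖) ∧
    (∃ C, 0 ≤ C ∧ ∀ g, ‖R g‖ ≤ C * I hab |g| ∧
      ∀ x y : Icc a b, |R g x - R g y| ≤ C * I hab |g| * |(x : ℝ) - y|) ∧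
    (∀ (g : X a b) (v ε η : ℝ) (x : Icc a b), 0 ≤ ε → a + η ≤ x → x ≤ b - η → 0 ≤ η →
      (∀ t ∈ Icc a b, |x - t| ≤ η → |ext hab g t - v| ≤ ε) →
      |κ ^ 2 * R g x - v| ≤ ε + 6 * (‖g‖ + |v|) * Real.exp (-(κ / 2) * η) +
        50 * ‖q‖ * ‖g‖ / κ ^ 2) := by
  obtain ⟨κ1, hκ1, H⟩ := exists_R0 hab α β
  refine ⟨max κ1 (10 * ‖q‖ + 1), lt_of_lt_of_le hκ1 (by simp), fun κ hκ => ?_⟩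
  obtain ⟨R0, h1, h2, ⟨C0, hC0, h3⟩, h4⟩ := H κ (le_trans (by simp) hκ)
  have hk2 : 10 * ‖q‖ + 1 ≤ κ := le_trans (by simp) hκ
  have hq0 := norm_nonneg q
  have hκ0 : 0 < κ := by linarith
  have hκsq : 10 * ‖q‖ ≤ κ ^ 2 := by nlinarith
  have hκ2 : 0 < κ ^ 2 := by positivity
  have h5 : ∀ g : X a b, ‖R0 (q * g)‖ ≤ 1 / 2 * ‖g‖ := fun g => by
    refine (h2 _).trans ?_
    have hm := norm_mul_le q g
    have : 5 / κ ^ 2 * ‖q‖ ≤ 1 / 2 := by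
      rw [div_mul_eq_mul_div, div_le_iff₀ hκ2]; linarith
    calc 5 / κ ^ 2 * ‖q * g‖ ≤ 5 / κ ^ 2 * (‖q‖ * ‖g‖) := by gcongr
      _ = (5 / κ ^ 2 * ‖q‖) * ‖g‖ := by ring
      _ ≤ _ := by gcongr
  let T : X a b →L[ℝ] X a b := R0.comp (ContinuousLinearMap.mul ℝ (X a b) q)
  have hT : ∀ g, T g = R0 (q * g) := fun g => rfl
  have hTn : ‖-T‖ < 1 := by
    refine lt_of_le_of_lt ((-T).opNorm_le_bound (by norm_num : (0:ℝ) ≤ 1 / 2) fun g => ?_)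
      (by norm_num)
    have e : (-T) g = -(R0 (q * g)) := rfl
    rw [e]; exact (norm_neg (R0 (q * g))).le.trans (h5 g)
  let U := Units.oneSub (-T) hTn
  let R : X a b →L[ℝ] X a b := (↑(U⁻¹) : X a b →L[ℝ] X a b) * R0
  have hUR : (1 - -T) * R = R0 := by
    have : (U : X a b →L[ℝ] X a b) = 1 - -T := rfl
    rw [← this]; simp only [R]; rw [← mul_assoc, Units.mul_inv, one_mul]
  have hR : ∀ g, R g + R0 (q * R g) = R0 g := fun g => by
    have := congrArg (fun S : X a b →L[ℝ] X a b => S g) hUR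
    rw [sub_neg_eq_add] at this
    exact this
  have hR' : ∀ g, R g = R0 (g - q * R g) := fun g => by
    rw [map_sub, ← hR g]; abel
  have hb : ∀ g, ‖R g‖ ≤ 2 * ‖R0 g‖ := fun g => by
    have e : R g = R0 g - R0 (q * R g) := by rw [← hR g]; abel
    have := norm_sub_le (R0 g) (R0 (q * R g))
    rw [← e] at this
    linarith [h5 (R g)]
  have hb10 : ∀ g, ‖R g‖ ≤ 10 / κ ^ 2 * ‖g‖ := fun g => by
    refine (hb g).trans ((mul_le_mul_of_nonneg_left (h2 g) (by norm_num)).trans (le_of_eq ?_))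
    ring
  have hN : ∀ g : X a b, 0 ≤ I hab |g| := fun g => I_nonneg hab fun x => abs_nonneg _
  have hbN : ∀ g, ‖R g‖ ≤ 2 * C0 * I hab |g| := fun g => by
    have := (h3 g).1
    linarith [hb g]
  refine ⟨R, ?_, hb10, ⟨max (2 * C0) (C0 * (1 + (b - a) * (‖q‖ * (2 * C0)))),
    le_max_of_le_left (by positivity), fun g => ⟨?_, ?_⟩⟩, ?_⟩
  · intro g
    have := h1 (g - q * R g)
    rw [← hR' g] at this
    convert this using 1
    abel
  · exact (hbN g).trans (mul_le_mul_of_nonneg_right (le_max_left _ _) (hN g))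
  · intro x y
    have e := (h3 (g - q * R g)).2 x y
    rw [← hR' g] at e
    refine e.trans (mul_le_mul_of_nonneg_right ?_ (abs_nonneg _))
    have m1 : I hab |g - q * R g| ≤ I hab |g| + I hab |q * R g| := by
      rw [← map_add]
      exact I_mono hab fun x => abs_sub _ _
    have m2 : I hab |q * R g| ≤ (b - a) * (‖q‖ * (2 * C0 * I hab |g|)) := by
      refine (le_abs_self _).trans ((abs_I_le hab _).trans ?_)
      have : ‖|q * R g|‖ ≤ ‖q‖ * (2 * C0 * I hab |g|) := by
        refine le_trans ((ContinuousMap.norm_le _ (norm_nonneg (q * R g))).2 fun x => ?_) ?_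
        · have := (q * R g).norm_coe_le_norm x
          simpa using this
        exact (norm_mul_le _ _).trans (mul_le_mul_of_nonneg_left (hbN g) hq0)
      exact mul_le_mul_of_nonneg_left this (sub_pos.2 hab).le
    calc C0 * I hab |g - q * R g| ≤ C0 * (I hab |g| + (b - a) * (‖q‖ * (2 * C0 * I hab |g|))) :=
          mul_le_mul_of_nonneg_left (m1.trans (by linarith)) hC0
      _ = C0 * (1 + (b - a) * (‖q‖ * (2 * C0))) * I hab |g| := by ring
      _ ≤ _ := mul_le_mul_of_nonneg_right (le_max_right _ _) (hN g)
  · intro g v ε η x hε hxa hxb hη hloc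
    have l := h4 g v ε η x hε hxa hxb hη hloc
    have e : R g x = R0 g x - R0 (q * R g) x := by
      rw [← hR g]; simp
    have n1 : |κ ^ 2 * R0 (q * R g) x| ≤ 50 * ‖q‖ * ‖g‖ / κ ^ 2 := by
      rw [abs_mul, abs_of_pos hκ2]
      have : |R0 (q * R g) x| ≤ 5 / κ ^ 2 * (‖q‖ * (10 / κ ^ 2 * ‖g‖)) := by
        refine ((R0 (q * R g)).norm_coe_le_norm x).trans ((h2 _).trans ?_)
        gcongr
        exact (norm_mul_le _ _).trans (mul_le_mul_of_nonneg_left (hb10 g) hq0)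
      calc κ ^ 2 * |R0 (q * R g) x| ≤ κ ^ 2 * (5 / κ ^ 2 * (‖q‖ * (10 / κ ^ 2 * ‖g‖))) := by gcongr
        _ = _ := by field_simp; ring
    have e2 : κ ^ 2 * R g x - v = (κ ^ 2 * R0 g x - v) - κ ^ 2 * R0 (q * R g) x := by
      rw [e]; ring
    rw [e2]
    exact (abs_sub _ _).trans (add_le_add l n1)

end fullR
end SLX

namespace SLX

open Set Filter

section res
variable {a b : ℝ} (hab : a < b)

/-- Properties of the resolvent. -/
structure Res (α β : ℝ) (q : X a b) (κ : ℝ) (R : X a b →L[ℝ] X a b) : Prop where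
  dom : ∀ g, Dom hab α β (R g) (q * R g + (κ ^ 2) • R g - g)
  bd : ∀ g, ‖R g‖ ≤ 10 / κ ^ 2 * ‖g‖
  l1 : ∃ C, 0 ≤ C ∧ ∀ g, ‖R g‖ ≤ C * I hab |g| ∧
      ∀ x y : Icc a b, |R g x - R g y| ≤ C * I hab |g| * |(x : ℝ) - y|
  loc : ∀ (g : X a b) (v ε η : ℝ) (x : Icc a b), 0 ≤ ε → a + η ≤ x → x ≤ b - η → 0 ≤ η →
      (∀ t ∈ Icc a b, |x - t| ≤ η → |ext hab g t - v| ≤ ε) →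
      |κ ^ 2 * R g x - v| ≤ ε + 6 * (‖g‖ + |v|) * Real.exp (-(κ / 2) * η) +
        50 * ‖q‖ * ‖g‖ / κ ^ 2

theorem exists_Res (α β : ℝ) (q : X a b) : ∀ᶠ κ in atTop, ∃ R, Res hab α β q κ R := by
  obtain ⟨κ0, _, H⟩ := exists_R hab α β q
  filter_upwards [eventually_ge_atTop κ0] with κ hκ
  obtain ⟨R, h1, h2, h3, h4⟩ := H κ hκ
  exact ⟨R, h1, h2, h3, h4⟩

variable {α β : ℝ} {q : X a b}

theorem pow_succ_app (T : X a b →L[ℝ] X a b) (k : ℕ) (f : X a b) :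
    (T ^ (k + 1)) f = T ((T ^ k) f) := by
  rw [pow_succ']; rfl

theorem Res.pow_bd {κ : ℝ} {R : X a b →L[ℝ] X a b} (hR : Res hab α β q κ R) (hκ : 0 < κ) (f : X a b)
    (k : ℕ) : ‖((κ ^ 2 • R) ^ k) f‖ ≤ 10 ^ k * ‖f‖ := by
  induction k with
  | zero => simp
  | succ k ih =>
    rw [pow_succ_app]
    have e : (κ ^ 2 • R) (((κ ^ 2 • R) ^ k) f) = κ ^ 2 • R (((κ ^ 2 • R) ^ k) f) := rfl
    have hκ2 : 0 < κ ^ 2 := by positivity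
    rw [e, norm_smul, Real.norm_of_nonneg hκ2.le]
    calc κ ^ 2 * ‖R (((κ ^ 2 • R) ^ k) f)‖ ≤ κ ^ 2 * (10 / κ ^ 2 * ‖((κ ^ 2 • R) ^ k) f‖) := by
          gcongr; exact hR.bd _
      _ = 10 * ‖((κ ^ 2 • R) ^ k) f‖ := by field_simp
      _ ≤ 10 * (10 ^ k * ‖f‖) := by gcongr
      _ = _ := by ring

theorem pow_conv (f : X a b) (k : ℕ) : ∀ ε > 0, ∀ d > 0, ∀ᶠ κ in atTop, ∀ R, Res hab α β q κ R →
    ∀ x : Icc a b, a + d ≤ x → (x : ℝ) ≤ b - d → |((κ ^ 2 • R) ^ k) f x - f x| ≤ ε := by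
  induction k with
  | zero => intro ε hε d hd; exact Eventually.of_forall fun κ R _ x _ _ => by simpa using hε.le
  | succ k ih =>
    intro ε hε d hd
    have huc : UniformContinuous f := CompactSpace.uniformContinuous_of_continuous f.continuous
    obtain ⟨η0, hη0, hf⟩ := Metric.uniformContinuous_iff.1 huc (ε / 4) (by positivity)
    set η := min (η0 / 2) (d / 2) with hη
    have hηpos : 0 < η := lt_min (by positivity) (by positivity)
    have lim : Tendsto (fun κ : ℝ => 6 * (10 ^ k * ‖f‖ + ‖f‖) * Real.exp (-(κ / 2) * η) +
        50 * ‖q‖ * (10 ^ k * ‖f‖) / κ ^ 2) atTop (nhds (6 * (10 ^ k * ‖f‖ + ‖f‖) * 0 + 0)) := by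
      refine Tendsto.add (Tendsto.const_mul _ ?_) ?_
      · refine Real.tendsto_exp_atBot.comp ?_
        have : (fun κ : ℝ => -(κ / 2) * η) = fun κ => (-(η / 2)) * κ := by funext κ; ring
        rw [this]
        exact tendsto_id.const_mul_atTop_of_neg (by linarith)
      · exact tendsto_const_nhds.div_atTop (tendsto_pow_atTop two_ne_zero)
    rw [mul_zero, add_zero] at lim
    filter_upwards [ih (ε / 4) (by positivity) (d / 2) (by positivity), eventually_gt_atTop 0,
      lim.eventually (gt_mem_nhds (by positivity : 0 < ε / 2))] with κ h1 hκ h2 R hR x hxa hxb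
    rw [pow_succ_app]
    set g := ((κ ^ 2 • R) ^ k) f with hg
    have e : (κ ^ 2 • R) g x = κ ^ 2 * R g x := rfl
    rw [e]
    have hgn : ‖g‖ ≤ 10 ^ k * ‖f‖ := hR.pow_bd hab hκ f k
    have hη1 : η ≤ d / 2 := min_le_right _ _
    have hη2 : η ≤ η0 / 2 := min_le_left _ _
    have := hR.loc g (f x) (ε / 2) η x (by positivity) (by linarith) (by linarith) hηpos.le (by
      intro t ht htx
      have h3 := abs_le.1 htx
      have h4 := h1 R hR ⟨t, ht⟩ (by simp only; linarith) (by simp only; linarith)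
      have h5 := hf (a := ⟨t, ht⟩) (b := x) (by
        rw [Subtype.dist_eq, dist_comm, Real.dist_eq]; simp only; linarith)
      rw [Real.dist_eq] at h5
      rw [ext_mem hab g ht]
      have := abs_sub_le (g ⟨t, ht⟩) (f ⟨t, ht⟩) (f x)
      linarith)
    refine this.trans ?_
    have hfx : |f x| ≤ ‖f‖ := f.norm_coe_le_norm x
    have b1 : 6 * (‖g‖ + |f x|) * Real.exp (-(κ / 2) * η) ≤
        6 * (10 ^ k * ‖f‖ + ‖f‖) * Real.exp (-(κ / 2) * η) := by gcongr
    have b2 : 50 * ‖q‖ * ‖g‖ / κ ^ 2 ≤ 50 * ‖q‖ * (10 ^ k * ‖f‖) / κ ^ 2 := by gcongr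
    linarith

theorem poly_apply (T : X a b →L[ℝ] X a b) (p : Polynomial ℝ) (f : X a b) :
    (Polynomial.aeval T p) f = ∑ i ∈ Finset.range (p.natDegree + 1), p.coeff i • (T ^ i) f := by
  rw [Polynomial.aeval_eq_sum_range, _root_.sum_apply]
  rfl

theorem poly_conv (f : X a b) (p : Polynomial ℝ) (hp : p.eval 1 = 1) : ∀ ε > 0, ∀ d > 0,
    ∀ᶠ κ in atTop, ∀ R, Res hab α β q κ R → ∀ x : Icc a b, a + d ≤ x → (x : ℝ) ≤ b - d →
      |(Polynomial.aeval (κ ^ 2 • R) p) f x - f x| ≤ ε := by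
  intro ε hε d hd
  set S := ∑ i ∈ Finset.range (p.natDegree + 1), |p.coeff i| with hS
  have hS0 : 0 ≤ S := Finset.sum_nonneg fun i _ => abs_nonneg _
  have hpow : ∀ᶠ κ in atTop, ∀ i ∈ Finset.range (p.natDegree + 1), ∀ R, Res hab α β q κ R →
      ∀ x : Icc a b, a + d ≤ x → (x : ℝ) ≤ b - d →
      |((κ ^ 2 • R) ^ i) f x - f x| ≤ ε / (S + 1) :=
    (Filter.eventually_all_finset _).2 fun i _ => pow_conv hab f i _ (by positivity) d hd
  filter_upwards [hpow] with κ h R hR x hxa hxb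
  rw [poly_apply]
  have e1 : ∑ i ∈ Finset.range (p.natDegree + 1), p.coeff i = 1 := by
    rw [← hp, Polynomial.eval_eq_sum_range]; simp
  have e2 : (∑ i ∈ Finset.range (p.natDegree + 1), p.coeff i • ((κ ^ 2 • R) ^ i) f) x - f x =
      ∑ i ∈ Finset.range (p.natDegree + 1), p.coeff i * (((κ ^ 2 • R) ^ i) f x - f x) := by
    rw [ContinuousMap.sum_apply]
    simp only [mul_sub, Finset.sum_sub_distrib, ← Finset.sum_mul, e1, one_mul]
    rfl
  rw [e2]
  calc _ ≤ ∑ i ∈ Finset.range (p.natDegree + 1), |p.coeff i| * (ε / (S + 1)) := by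
        refine (Finset.abs_sum_le_sum_abs _ _).trans (Finset.sum_le_sum fun i hi => ?_)
        rw [abs_mul]
        gcongr
        exact h i hi R hR x hxa hxb
    _ = S * (ε / (S + 1)) := by rw [← Finset.sum_mul]
    _ ≤ ε := by
      rw [mul_div_assoc', div_le_iff₀ (by positivity)]; nlinarith

theorem Res.symm {κ : ℝ} {R : X a b →L[ℝ] X a b} (hR : Res hab α β q κ R) (g h : X a b) :
    I hab (R g * h) = I hab (g * R h) := by
  have := lagrange hab (hR.dom g) (hR.dom h)
  have e : (q * R g + κ ^ 2 • R g - g) * R h - R g * (q * R h + κ ^ 2 • R h - h) =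
      R g * h - g * R h := by
    ext x; simp; ring
  have e2 := congrArg (I hab) e
  rw [map_sub, map_sub, this, sub_self] at e2
  linarith

theorem Res.coef {κ lam : ℝ} {R : X a b →L[ℝ] X a b} (hR : Res hab α β q κ R) {v : X a b}
    (hv : Dom hab α β v (q * v - lam • v)) (g : X a b) :
    (lam + κ ^ 2) * I hab (R g * v) = I hab (g * v) := by
  have := lagrange hab (hR.dom g) hv
  have e : (q * R g + κ ^ 2 • R g - g) * v - R g * (q * v - lam • v) =
      (lam + κ ^ 2) • (R g * v) - g * v := by
    ext x; simp; ring
  have e2 := congrArg (I hab) e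
  rw [map_sub, map_sub, this, sub_self, map_smul, smul_eq_mul] at e2
  linarith

theorem Res.coef_poly {κ lam : ℝ} {R : X a b →L[ℝ] X a b} (hR : Res hab α β q κ R) {v : X a b}
    (hv : Dom hab α β v (q * v - lam • v)) (hl : lam + κ ^ 2 ≠ 0) (p : Polynomial ℝ) (g : X a b) :
    I hab ((Polynomial.aeval (κ ^ 2 • R) p) g * v) =
      p.eval (κ ^ 2 / (lam + κ ^ 2)) * I hab (g * v) := by
  have hpow : ∀ i : ℕ, I hab (((κ ^ 2 • R) ^ i) g * v) =
      (κ ^ 2 / (lam + κ ^ 2)) ^ i * I hab (g * v) := by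
    intro i
    induction i with
    | zero => simp
    | succ i ih =>
      rw [pow_succ_app]
      have e : (κ ^ 2 • R) (((κ ^ 2 • R) ^ i) g) * v =
        κ ^ 2 • (R (((κ ^ 2 • R) ^ i) g) * v) := by
        rw [← smul_mul_assoc]; rfl
      have := hR.coef hab hv (((κ ^ 2 • R) ^ i) g)
      rw [ih] at this
      rw [e, map_smul, smul_eq_mul]
      have hJ : I hab (R (((κ ^ 2 • R) ^ i) g) * v) =
          (κ ^ 2 / (lam + κ ^ 2)) ^ i * I hab (g * v) / (lam + κ ^ 2) := by
        rw [eq_div_iff hl, mul_comm]; exact this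
      rw [hJ]; ring
  rw [poly_apply, Finset.sum_mul, map_sum, Polynomial.eval_eq_sum_range, Finset.sum_mul]
  refine Finset.sum_congr rfl fun i _ => ?_
  rw [smul_mul_assoc, map_smul, hpow, smul_eq_mul]; ring

end res
end SLX

namespace SLX

open Set Filter

section compl
variable {a b : ℝ} (hab : a < b)

theorem Dom.lin {α β : ℝ} {u w v z : X a b} (h1 : Dom hab α β u w) (h2 : Dom hab α β v z)
    (c d : ℝ) : Dom hab α β (c • u + d • v) (c • w + d • z) := by
  obtain ⟨U', hu1, hu2, hua, hub⟩ := h1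
  obtain ⟨V', hv1, hv2, hva, hvb⟩ := h2
  refine ⟨fun x => c * U' x + d * V' x,
    fun x hx => ((hu1 x hx).const_mul c).add ((hv1 x hx).const_mul d),
    fun x hx => ((hu2 x hx).const_mul c).add ((hv2 x hx).const_mul d), ?_, ?_⟩
  · simp only [ext_add, ext_smul]; linear_combination c * hua + d * hva
  · simp only [ext_add, ext_smul]; linear_combination c * hub + d * hvb

theorem Dom.of_zero {α β : ℝ} {w : X a b} (h : Dom hab α β 0 w) : w = 0 := by
  obtain ⟨U', h1, h2, -, -⟩ := h
  have hU : ∀ x ∈ Icc a b, U' x = 0 := fun x hx =>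
    (uniqueDiffOn_Icc hab x hx).eq_deriv _ (h1 x hx)
      ((hasDerivWithinAt_const x (Icc a b) (0 : ℝ)).congr (fun _ _ => rfl) rfl)
  ext x
  have := (uniqueDiffOn_Icc hab x x.2).eq_deriv _ (h2 x x.2)
      ((hasDerivWithinAt_const (x : ℝ) (Icc a b) (0 : ℝ)).congr hU (hU x x.2))
  rw [ext_coe] at this
  exact this

theorem I_abs_le (g : X a b) : I hab |g| ≤ √(b - a) * √(I hab (g * g)) := by
  have h := I_cs hab |g| 1
  have e1 : |g| * |g| = g * g := by ext x; simp
  have e2 : I hab ((1 : X a b) * 1) = b - a := by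
    rw [I_apply, mul_one]
    have : ext hab (1 : X a b) = fun _ => 1 := rfl
    rw [this]; simp
  rw [mul_one, e1, e2] at h
  rw [← Real.sqrt_mul (sub_pos.2 hab).le, mul_comm]
  exact Real.le_sqrt_of_sq_le h

variable {α β : ℝ} {q : X a b} {κ : ℝ} {R : X a b →L[ℝ] X a b}

theorem Res.l2 (hR : Res hab α β q κ R) : ∃ C, 0 ≤ C ∧ ∀ g, ‖R g‖ ≤ C * √(I hab (g * g)) ∧
      ∀ x y : Icc a b, |R g x - R g y| ≤ C * √(I hab (g * g)) * |(x : ℝ) - y| := by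
  obtain ⟨C, hC, h⟩ := hR.l1
  refine ⟨C * √(b - a), by positivity, fun g => ⟨?_, fun x y => ?_⟩⟩
  · rw [mul_assoc]
    exact (h g).1.trans (by gcongr; exact I_abs_le hab g)
  · rw [mul_assoc C]
    exact ((h g).2 x y).trans (by gcongr; exact I_abs_le hab g)

theorem Res.inj (hR : Res hab α β q κ R) {g : X a b} (hg : R g = 0) : g = 0 := by
  have := hR.dom g
  rw [hg] at this
  have := Dom.of_zero hab this
  simpa using this

theorem Res.compact (hR : Res hab α β q κ R) (g : ℕ → X a b) (hg : ∀ k, I hab (g k * g k) = 1) :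
    ∃ (w : X a b) (φ : ℕ → ℕ), StrictMono φ ∧ Tendsto (fun k => R (g (φ k))) atTop (nhds w) := by
  obtain ⟨C, hC, h⟩ := hR.l2
  let e := ContinuousMap.isometryEquivBoundedOfCompact (Icc a b) ℝ
  let A : Set (BoundedContinuousFunction (Icc a b) ℝ) := range fun k => e (R (g k))
  have hA : IsCompact (closure A) := by
    refine BoundedContinuousFunction.arzela_ascoli (Metric.closedBall 0 C)
      (isCompact_closedBall _ _) A ?_ ?_
    · rintro _ x ⟨k, rfl⟩
      rw [mem_closedBall_zero_iff]
      have h1 := (h (g k)).1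
      rw [hg, Real.sqrt_one, mul_one] at h1
      exact ((R (g k)).norm_coe_le_norm x).trans h1
    · refine (LipschitzWith.uniformEquicontinuous _ ⟨C, hC⟩ ?_).equicontinuous
      rintro ⟨_, k, rfl⟩
      refine LipschitzWith.of_dist_le_mul fun x y => ?_
      have h1 := (h (g k)).2 x y
      rw [hg, Real.sqrt_one, mul_one] at h1
      exact h1
  obtain ⟨w, -, φ, hφ, hw⟩ := hA.tendsto_subseq (x := fun k => e (R (g k)))
    (fun k => subset_closure ⟨k, rfl⟩)
  refine ⟨e.symm w, φ, hφ, ?_⟩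
  have := (e.symm.continuous.tendsto w).comp hw
  refine this.congr fun k => ?_
  simp

/-- A complete system of normalized eigenfunctions. -/
structure Sys (α β : ℝ) (q : X a b) (lam : ℕ → ℝ) (Y : ℕ → X a b) : Prop where
  dom : ∀ n, Dom hab α β (Y n) (q * Y n - lam n • Y n)
  nrm : ∀ n, I hab (Y n * Y n) = 1
  mono : StrictMono lam
  compl : ∀ μ w, w ≠ 0 → Dom hab α β w (q * w - μ • w) → ∃ n, lam n = μ

variable {lam : ℕ → ℝ} {Y : ℕ → X a b}

/-- eigenvectors of the resolvent -/
theorem Res.no_eig (hR : Res hab α β q κ R) (hS : Sys hab α β q lam Y) {w : X a b} {θ : ℝ}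
    (hθ : θ ≠ 0) (hw : R w = θ • w) (ho : ∀ n, I hab (w * Y n) = 0) : w = 0 := by
  by_contra hw0
  have h1 := hR.dom w
  have h2 := Dom.lin hab h1 h1 θ⁻¹ 0
  rw [hw] at h2
  have e1 : θ⁻¹ • θ • w + (0 : ℝ) • θ • w = w := by
    rw [smul_smul, inv_mul_cancel₀ hθ, one_smul, zero_smul, add_zero]
  have e2 : θ⁻¹ • (q * θ • w + κ ^ 2 • θ • w - w) + (0 : ℝ) • (q * θ • w + κ ^ 2 • θ • w - w) =
      q * w - (θ⁻¹ - κ ^ 2) • w := by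
    ext x; simp; field_simp; ring
  rw [e1, e2] at h2
  obtain ⟨n, hn⟩ := hS.compl _ _ hw0 h2
  have h3 := hS.dom n
  rw [hn] at h3
  have hY : Y n ≠ 0 := by
    intro h0
    have := hS.nrm n
    rw [h0] at this; simp at this
  obtain ⟨c, hc⟩ := simple hab h2 h3 hY
  have h4 := ho n
  rw [hc, smul_mul_assoc, map_smul, hS.nrm, smul_eq_mul, mul_one] at h4
  rw [h4, zero_smul] at hc
  exact hw0 hc

theorem Res.orth (hR : Res hab α β q κ R) (hS : Sys hab α β q lam Y) (hk : ∀ n, lam n + κ ^ 2 ≠ 0)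
    {g : X a b} (hg : ∀ n, I hab (g * Y n) = 0) (n : ℕ) : I hab (R g * Y n) = 0 := by
  have := hR.coef hab (hS.dom n) g
  rw [hg n] at this
  exact (mul_eq_zero.1 this).resolve_left (hk n)

theorem Res.complete (hR : Res hab α β q κ R) (hS : Sys hab α β q lam Y)
    (hk : ∀ n, lam n + κ ^ 2 ≠ 0) {g : X a b} (hg : ∀ n, I hab (g * Y n) = 0) : g = 0 := by
  by_contra g0
  obtain ⟨C, hC, hl2⟩ := hR.l2
  let T : Set ℝ := {m | ∃ h : X a b, (∀ n, I hab (h * Y n) = 0) ∧ I hab (h * h) = 1 ∧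
    I hab (R h * R h) = m}
  have hbdd : BddAbove T := by
    refine ⟨(b - a) * (C * C), ?_⟩
    rintro _ ⟨h, -, h1, rfl⟩
    have h2 := (hl2 h).1
    rw [h1, Real.sqrt_one, mul_one] at h2
    refine (le_abs_self _).trans ((abs_I_le hab _).trans ?_)
    have : 0 ≤ b - a := (sub_pos.2 hab).le
    gcongr
    exact (norm_mul_le _ _).trans (by gcongr)
  have scale : ∀ h : X a b, h ≠ 0 → (∀ n, I hab (h * Y n) = 0) →
      I hab (R h * R h) / I hab (h * h) ∈ T := by
    intro h h0 ho
    have hp := I_sq_pos hab h0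
    have e2 : (√(I hab (h * h)))⁻¹ * (√(I hab (h * h)))⁻¹ = (I hab (h * h))⁻¹ := by
      rw [← mul_inv, Real.mul_self_sqrt hp.le]
    refine ⟨(√(I hab (h * h)))⁻¹ • h, fun n => ?_, ?_, ?_⟩
    · rw [smul_mul_assoc, map_smul, ho, smul_zero]
    · rw [smul_mul_smul_comm, map_smul, smul_eq_mul, e2, inv_mul_cancel₀ hp.ne']
    · rw [map_smul, smul_mul_smul_comm, map_smul, smul_eq_mul, e2]; ring
  set M := sSup T with hM
  have hle : ∀ h : X a b, (∀ n, I hab (h * Y n) = 0) → I hab (R h * R h) ≤ M * I hab (h * h) := by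
    intro h ho
    by_cases h0 : h = 0
    · rw [h0]; simp
    · have := le_csSup hbdd (scale h h0 ho)
      rwa [div_le_iff₀ (I_sq_pos hab h0)] at this
  have hMpos : 0 < M := by
    have h1 := le_csSup hbdd (scale g g0 hg)
    refine lt_of_lt_of_le ?_ h1
    exact div_pos (I_sq_pos hab fun h => g0 (hR.inj hab h)) (I_sq_pos hab g0)
  have hne : T.Nonempty := ⟨_, scale g g0 hg⟩
  have hseq : ∀ k : ℕ, ∃ h : X a b, (∀ n, I hab (h * Y n) = 0) ∧ I hab (h * h) = 1 ∧
      M - 1 / ((k : ℝ) + 1) ≤ I hab (R h * R h) ∧ I hab (R h * R h) ≤ M := by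
    intro k
    obtain ⟨m, ⟨h, h1, h2, h3⟩, hlt⟩ := exists_lt_of_lt_csSup hne
      (show M - 1 / ((k : ℝ) + 1) < sSup T by
        have : 0 < 1 / ((k : ℝ) + 1) := by positivity
        linarith)
    refine ⟨h, h1, h2, by rw [h3]; exact hlt.le, ?_⟩
    have := hle h h1
    rwa [h2, mul_one] at this
  choose h ho hn hlow hup using hseq
  obtain ⟨w, φ, hφ, hw⟩ := hR.compact hab h hn
  have hlim0 : Tendsto (fun k : ℕ => 1 / ((k : ℝ) + 1)) atTop (nhds 0) :=
    tendsto_one_div_add_atTop_nhds_zero_nat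
  have hRd : ∀ k, ‖R (R (R (h k))) - M • R (h k)‖ ≤ C * √(M * (1 / ((k : ℝ) + 1))) := by
    intro k
    have e : R (R (R (h k))) - M • R (h k) = R (R (R (h k)) - M • h k) := by
      rw [map_sub, map_smul]
    rw [e]
    refine (hl2 _).1.trans ?_
    gcongr
    have e1 : (R (R (h k)) - M • h k) * (R (R (h k)) - M • h k) =
        R (R (h k)) * R (R (h k)) - (2 * M) • (R (R (h k)) * h k) + (M * M) • (h k * h k) := by
      ext x; simp; ring
    have e2 := hR.symm hab (R (h k)) (h k)
    have e3 := hle (R (h k)) (hR.orth hab hS hk (ho k))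
    rw [e1, map_add, map_sub, map_smul, map_smul, e2, hn, smul_eq_mul, smul_eq_mul]
    nlinarith [hlow k]
  have hlim1 : Tendsto (fun k : ℕ => C * √(M * (1 / ((k : ℝ) + 1)))) atTop (nhds 0) := by
    have := ((hlim0.const_mul M).sqrt).const_mul C
    simpa using this
  have hz : Tendsto (fun k => R (R (R (h (φ k)))) - M • R (h (φ k))) atTop (nhds 0) :=
    (squeeze_zero_norm hRd hlim1).comp hφ.tendsto_atTop
  have hz2 : Tendsto (fun k => R (R (R (h (φ k)))) - M • R (h (φ k))) atTop
      (nhds (R (R w) - M • w)) :=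
    ((R.continuous.tendsto _).comp ((R.continuous.tendsto _).comp hw)).sub (hw.const_smul M)
  have hRR : R (R w) = M • w := sub_eq_zero.1 (tendsto_nhds_unique hz2 hz)
  have how : ∀ n, I hab (w * Y n) = 0 := by
    intro n
    have h1 : Tendsto (fun k => I hab (R (h (φ k)) * Y n)) atTop (nhds (I hab (w * Y n))) :=
      ((I hab).continuous.tendsto _).comp (hw.mul_const (Y n))
    have h2 : (fun k => I hab (R (h (φ k)) * Y n)) = fun _ => 0 := by
      funext k; exact hR.orth hab hS hk (ho _) n
    rw [h2] at h1
    exact (tendsto_nhds_unique h1 tendsto_const_nhds)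
  have hww : I hab (w * w) = M := by
    have h1 : Tendsto (fun k => I hab (R (h (φ k)) * R (h (φ k)))) atTop (nhds (I hab (w * w))) :=
      ((I hab).continuous.tendsto _).comp (hw.mul hw)
    have h2 : Tendsto (fun k => I hab (R (h k) * R (h k))) atTop (nhds M) := by
      refine tendsto_of_tendsto_of_tendsto_of_le_of_le ?_ tendsto_const_nhds hlow hup
      simpa using hlim0.const_sub M
    exact tendsto_nhds_unique h1 (h2.comp hφ.tendsto_atTop)
  have hθ : √M ≠ 0 := (Real.sqrt_pos.2 hMpos).ne'
  have hv : R w + √M • w = 0 := by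
    refine hR.no_eig hab hS hθ ?_ fun n => ?_
    · rw [map_add, map_smul, hRR, smul_add, smul_smul, Real.mul_self_sqrt hMpos.le, add_comm]
    · rw [add_mul, map_add, hR.orth hab hS hk how, smul_mul_assoc, map_smul, how]; simp
  have hw0 : w = 0 := by
    refine hR.no_eig hab hS (θ := -√M) (neg_ne_zero.2 hθ) ?_ how
    rw [neg_smul]; exact eq_neg_of_add_eq_zero_left hv
  rw [hw0] at hww
  simp at hww
  linarith

end compl
end SLX

namespace SLX

open Set Filter

section growth
variable {a b : ℝ} (hab : a < b)
variable {α β : ℝ} {q : X a b} {κ : ℝ} {R : X a b →L[ℝ] X a b}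
variable {lam : ℕ → ℝ} {Y : ℕ → X a b}

theorem Sys.ortho (hS : Sys hab α β q lam Y) {n m : ℕ} (h : n ≠ m) : I hab (Y n * Y m) = 0 := by
  have h1 := lagrange hab (hS.dom n) (hS.dom m)
  have e : (q * Y n - lam n • Y n) * Y m - Y n * (q * Y m - lam m • Y m) =
      (lam m - lam n) • (Y n * Y m) := by
    ext x; simp; ring
  have e2 := congrArg (I hab) e
  rw [map_sub, h1, sub_self, map_smul, smul_eq_mul] at e2
  refine (mul_eq_zero.1 e2.symm).resolve_left fun h0 => h ?_
  exact (hS.mono.injective (sub_eq_zero.1 h0)).symm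

theorem Sys.ortho' (hS : Sys hab α β q lam Y) (n m : ℕ) :
    I hab (Y n * Y m) = if n = m then 1 else 0 := by
  split_ifs with h
  · rw [h]; exact hS.nrm m
  · exact hS.ortho hab h

theorem Res.eigY (hR : Res hab α β q κ R) (hS : Sys hab α β q lam Y)
    (hk : ∀ n, lam n + κ ^ 2 ≠ 0) (n : ℕ) : R (Y n) = (lam n + κ ^ 2)⁻¹ • Y n := by
  rw [← sub_eq_zero]
  refine hR.complete hab hS hk fun m => ?_
  have h1 := hR.coef hab (hS.dom m) (Y n)
  rw [sub_mul, map_sub, smul_mul_assoc, map_smul, smul_eq_mul]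
  rw [hS.ortho' hab] at h1 ⊢
  split_ifs at h1 ⊢ with h
  · subst h
    rw [mul_one, sub_eq_zero]; exact eq_inv_of_mul_eq_one_right h1
  · have := (mul_eq_zero.1 h1).resolve_left (hk m)
    rw [this]; simp

theorem Sys.tendsto (hS : Sys hab α β q lam Y) : Tendsto lam atTop atTop := by
  obtain ⟨κ, ⟨R, hR⟩, hκ⟩ : ∃ κ, (∃ R, Res hab α β q κ R) ∧ 0 < lam 0 + κ ^ 2 := by
    have h1 : Tendsto (fun κ : ℝ => lam 0 + κ ^ 2) atTop atTop :=
      tendsto_atTop_add_const_left _ _ (tendsto_pow_atTop two_ne_zero)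
    exact ((exists_Res hab α β q).and (h1.eventually_gt_atTop 0)).exists
  have hpos : ∀ n, 0 < lam n + κ ^ 2 := fun n => by
    have := hS.mono.monotone (Nat.zero_le n)
    linarith
  have hk : ∀ n, lam n + κ ^ 2 ≠ 0 := fun n => (hpos n).ne'
  obtain ⟨C, hC, hl2⟩ := hR.l2
  have bessel : ∀ (F : Finset ℕ) (x : Icc a b),
      ∑ n ∈ F, ((lam n + κ ^ 2)⁻¹ * Y n x) ^ 2 ≤ C ^ 2 := by
    intro F x
    set D := ∑ n ∈ F, ((lam n + κ ^ 2)⁻¹ * Y n x) ^ 2 with hD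
    have hD0 : 0 ≤ D := Finset.sum_nonneg fun _ _ => sq_nonneg _
    set G : X a b := ∑ n ∈ F, ((lam n + κ ^ 2)⁻¹ * Y n x) • Y n with hG
    have e1 : R G x = D := by
      rw [hG, map_sum, ContinuousMap.sum_apply]
      refine Finset.sum_congr rfl fun n _ => ?_
      rw [map_smul, hR.eigY hab hS hk]
      simp only [ContinuousMap.smul_apply, smul_eq_mul]; ring
    have e2 : I hab (G * G) = D := by
      rw [hG, Finset.sum_mul_sum, map_sum]
      refine Finset.sum_congr rfl fun n hn => ?_
      rw [map_sum]
      rw [Finset.sum_eq_single_of_mem n hn]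
      · rw [smul_mul_smul_comm, map_smul, hS.nrm, smul_eq_mul]; ring
      · intro m _ hm
        rw [smul_mul_smul_comm, map_smul, hS.ortho hab hm.symm, smul_zero]
    have h1 := (hl2 G).1
    rw [e2] at h1
    have h2 := (le_abs_self _).trans (((R G).norm_coe_le_norm x).trans h1)
    rw [e1] at h2
    have h3 : √D * √D = D := Real.mul_self_sqrt hD0
    have h4 := Real.sqrt_nonneg D
    nlinarith [sq_nonneg (√D - C)]
  have hsum : ∀ F : Finset ℕ, ∑ n ∈ F, ((lam n + κ ^ 2)⁻¹) ^ 2 ≤ (b - a) * C ^ 2 := by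
    intro F
    have e : ∑ n ∈ F, ((lam n + κ ^ 2)⁻¹) ^ 2 =
        I hab (∑ n ∈ F, ((lam n + κ ^ 2)⁻¹ ^ 2) • (Y n * Y n)) := by
      rw [map_sum]
      refine Finset.sum_congr rfl fun n _ => ?_
      rw [map_smul, hS.nrm, smul_eq_mul, mul_one]
    rw [e]
    refine (le_abs_self _).trans ((abs_I_le hab _).trans ?_)
    have : 0 ≤ b - a := (sub_pos.2 hab).le
    gcongr
    refine (ContinuousMap.norm_le _ (by positivity)).2 fun x => ?_
    rw [ContinuousMap.sum_apply, Real.norm_of_nonneg]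
    · refine le_trans (le_of_eq ?_) (bessel F x)
      refine Finset.sum_congr rfl fun n _ => ?_
      simp only [ContinuousMap.smul_apply, ContinuousMap.mul_apply, smul_eq_mul]; ring
    · refine Finset.sum_nonneg fun n _ => ?_
      simp only [ContinuousMap.smul_apply, ContinuousMap.mul_apply, smul_eq_mul]
      exact mul_nonneg (sq_nonneg _) (mul_self_nonneg _)
  have hsm : Summable fun n => ((lam n + κ ^ 2)⁻¹) ^ 2 :=
    summable_of_sum_le (fun _ => sq_nonneg _) hsum
  rcases tendsto_atTop_of_monotone hS.mono.monotone with h | ⟨l, hl⟩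
  · exact h
  · exfalso
    have hl0 : lam 0 ≤ l := hS.mono.monotone.ge_of_tendsto hl 0
    have h1 : Tendsto (fun n => ((lam n + κ ^ 2)⁻¹) ^ 2) atTop (nhds (((l + κ ^ 2)⁻¹) ^ 2)) :=
      ((hl.add_const _).inv₀ (by linarith : 0 < l + κ ^ 2).ne').pow 2
    have h2 := tendsto_nhds_unique h1 hsm.tendsto_atTop_zero
    have : 0 < l + κ ^ 2 := by linarith
    have : 0 < ((l + κ ^ 2)⁻¹) ^ 2 := by positivity
    linarith

end growth
end SLX

namespace SLX

open Set Filter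

section asym
variable {a b : ℝ} (hab : a < b)

/-- The comparison function `sin (s (x - a) + θ)`. -/
noncomputable def Sn (a b s θ : ℝ) : X a b := ⟨fun x => Real.sin (s * (x - a) + θ), by fun_prop⟩

theorem Sn_apply (s θ : ℝ) (x : Icc a b) : Sn a b s θ x = Real.sin (s * (x - a) + θ) := rfl

theorem Sn_norm (s θ : ℝ) : ‖Sn a b s θ‖ ≤ 1 :=
  (ContinuousMap.norm_le _ zero_le_one).2 fun _ => Real.abs_sin_le_one _

theorem ext_Sn (s θ : ℝ) {x : ℝ} (hx : x ∈ Icc a b) :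
    ext hab (Sn a b s θ) x = Real.sin (s * (x - a) + θ) := by
  rw [ext_mem hab _ hx]; rfl

theorem Sn_diff (hab : a < b) (s t θ : ℝ) : ‖Sn a b s θ - Sn a b t θ‖ ≤ |s - t| * (b - a) := by
  have h0 : 0 ≤ b - a := (sub_pos.2 hab).le
  refine (ContinuousMap.norm_le _ (by positivity)).2 fun x => ?_
  have h1 : |Real.sin (s * (x - a) + θ) - Real.sin (t * (x - a) + θ)| ≤
      |(s * (x - a) + θ) - (t * (x - a) + θ)| := by
    have := Real.lipschitzWith_sin.dist_le_mul (s * (x - a) + θ) (t * (x - a) + θ)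
    simpa [Real.dist_eq] using this
  refine h1.trans ?_
  have : (s * (x - a) + θ) - (t * (x - a) + θ) = (s - t) * (x - a) := by ring
  rw [this, abs_mul]
  have h2 := x.2.1
  have h3 := x.2.2
  gcongr
  rw [abs_of_nonneg (by linarith)]; linarith

theorem I_Sn_sq {s θ : ℝ} (hs : 0 < s) :
    (b - a) / 2 - 1 / (2 * s) ≤ I hab (Sn a b s θ * Sn a b s θ) := by
  rw [I_apply]
  have e : ∫ x in a..b, ext hab (Sn a b s θ * Sn a b s θ) x =
      ∫ x in a..b, (1 / 2 - Real.cos (2 * (s * (x - a) + θ)) / 2) := by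
    refine intervalIntegral.integral_congr fun x hx => ?_
    rw [uIcc_of_le hab.le] at hx
    rw [ext_mul, ext_Sn hab _ _ hx, ← pow_two, Real.sin_sq_eq_half_sub]
  rw [e, intervalIntegral.integral_eq_sub_of_hasDerivAt
    (f := fun x => x / 2 - Real.sin (2 * (s * (x - a) + θ)) / (4 * s))]
  · have h1 := Real.sin_le_one (2 * (s * (b - a) + θ))
    have h2 := Real.neg_one_le_sin (2 * (s * (a - a) + θ))
    have : Real.sin (2 * (s * (b - a) + θ)) / (4 * s) - Real.sin (2 * (s * (a - a) + θ)) / (4 * s)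
        ≤ 1 / (2 * s) := by
      rw [← sub_div, div_le_div_iff₀ (by positivity) (by positivity)]
      nlinarith
    linarith
  · intro x _
    have h1 : HasDerivAt (fun x : ℝ => 2 * (s * (x - a) + θ)) (2 * s) x := by
      have := ((((hasDerivAt_id x).sub_const a).const_mul s).add_const θ).const_mul 2
      simpa using this
    have h2 := ((hasDerivAt_id x).div_const 2).sub (h1.sin.div_const (4 * s))
    refine h2.congr_deriv ?_
    field_simp; ring
  · exact Continuous.intervalIntegrable (by fun_prop) _ _

theorem volterra {α β s : ℝ} {q Y : X a b} (hs : 0 < s) (h : Dom hab α β Y (q * Y - s ^ 2 • Y)) :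
    ∃ P Q : ℝ, P * Real.cos α + s * Q * Real.sin α = 0 ∧ ∀ x : Icc a b,
      |Y x - (P * Real.cos (s * (x - a)) + Q * Real.sin (s * (x - a)))| ≤
        (b - a) * ‖q‖ * ‖Y‖ / s := by
  obtain ⟨U, h1, h2, h3, -⟩ := h
  refine ⟨ext hab Y a, U a / s, ?_, fun x => ?_⟩
  · rw [← h3]; field_simp
  have hsub : Icc a (x : ℝ) ⊆ Icc a b := Icc_subset_Icc_right x.2.2
  have key := ftc (F := fun t => U t * (Real.sin (s * (x - t)) / s) +
      ext hab Y t * Real.cos (s * (x - t)))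
    (f := fun t => ext hab q t * ext hab Y t * Real.sin (s * (x - t)) / s) x.2.1 (by
      intro t ht
      have d1 : HasDerivWithinAt (fun t : ℝ => s * (x - t)) (-s) (Icc a x) t := by
        have := ((hasDerivWithinAt_id t (Icc a (x : ℝ))).const_sub (x : ℝ)).const_mul s
        simpa using this
      have d2 := ((h2 t (hsub ht)).mono hsub).mul (d1.sin.div_const s)
      have d3 := ((h1 t (hsub ht)).mono hsub).mul d1.cos
      refine (d2.add d3).congr_deriv ?_
      simp only [ext_sub, ext_mul, ext_smul]
      field_simp; ring) (by
      have := ext_cont hab q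
      have := ext_cont hab Y
      exact Continuous.continuousOn (by fun_prop))
  have e : Y x - (ext hab Y a * Real.cos (s * (x - a)) + U a / s * Real.sin (s * (x - a))) =
      ∫ t in a..x, ext hab q t * ext hab Y t * Real.sin (s * (x - t)) / s := by
    rw [key]; simp only [sub_self, mul_zero, Real.sin_zero, zero_div, Real.cos_zero, mul_one, zero_add,
      ext_coe]; ring
  rw [e]
  have := intervalIntegral.norm_integral_le_of_norm_le_const (a := a) (b := x)
        (f := fun t => ext hab q t * ext hab Y t * Real.sin (s * (x - t)) / s)
        (C := ‖q‖ * ‖Y‖ * 1 / s) (fun t _ => by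
          rw [Real.norm_eq_abs, abs_div, abs_mul, abs_mul, abs_of_pos hs]
          gcongr
          · exact abs_ext_le hab q t
          · exact abs_ext_le hab Y t
          · exact Real.abs_sin_le_one _)
  rw [Real.norm_eq_abs, abs_of_nonneg (sub_nonneg.2 x.2.1)] at this
  refine this.trans ?_
  have h5 := x.2.2
  calc ‖q‖ * ‖Y‖ * 1 / s * (x - a) ≤ ‖q‖ * ‖Y‖ * 1 / s * (b - a) := by gcongr
    _ = _ := by ring

theorem asym (α β : ℝ) (q : X a b) : ∃ θ K S : ℝ, 0 ≤ K ∧ 1 ≤ S ∧ ∀ s, S ≤ s → ∀ Y : X a b,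
    Dom hab α β Y (q * Y - s ^ 2 • Y) → ∃ A : ℝ, ‖Y - A • Sn a b s θ‖ ≤ K * |A| / s := by
  have h0 : 0 < b - a := sub_pos.2 hab
  have pre : ∀ s, 2 * (b - a) * ‖q‖ + 1 ≤ s → ∀ Y : X a b,
      Dom hab α β Y (q * Y - s ^ 2 • Y) → ∃ P Q : ℝ, P * Real.cos α + s * Q * Real.sin α = 0 ∧
      ∀ x : Icc a b, |Y x - (P * Real.cos (s * (x - a)) + Q * Real.sin (s * (x - a)))| ≤
        2 * (b - a) * ‖q‖ * (|P| + |Q|) / s := by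
    intro s hs Y hY
    have hspos : 0 < s := lt_of_lt_of_le (by positivity) hs
    obtain ⟨P, Q, h1, h2⟩ := volterra hab hspos hY
    refine ⟨P, Q, h1, fun x => (h2 x).trans ?_⟩
    have hY : ‖Y‖ ≤ 2 * (|P| + |Q|) := by
      have h3 : ‖Y‖ ≤ |P| + |Q| + ‖Y‖ / 2 := by
        refine (ContinuousMap.norm_le _ (by positivity)).2 fun x => ?_
        have h4 := h2 x
        have h5 : (b - a) * ‖q‖ * ‖Y‖ / s ≤ ‖Y‖ / 2 := by
          rw [div_le_div_iff₀ hspos two_pos]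
          nlinarith [norm_nonneg Y]
        have h6 : |P * Real.cos (s * (x - a)) + Q * Real.sin (s * (x - a))| ≤ |P| + |Q| := by
          refine (abs_add_le _ _).trans ?_
          rw [abs_mul, abs_mul]
          have := mul_le_of_le_one_right (abs_nonneg P) (Real.abs_cos_le_one (s * (x - a)))
          have := mul_le_of_le_one_right (abs_nonneg Q) (Real.abs_sin_le_one (s * (x - a)))
          linarith
        have h7 := abs_sub_abs_le_abs_sub (Y x)
          (P * Real.cos (s * (x - a)) + Q * Real.sin (s * (x - a)))
        rw [Real.norm_eq_abs]; linarith
      linarith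
    calc (b - a) * ‖q‖ * ‖Y‖ / s ≤ (b - a) * ‖q‖ * (2 * (|P| + |Q|)) / s := by gcongr
      _ = _ := by ring
  by_cases hα : Real.sin α = 0
  · have hc : Real.cos α ≠ 0 := by
      intro h; have := Real.sin_sq_add_cos_sq α; rw [hα, h] at this; norm_num at this
    refine ⟨0, 2 * (b - a) * ‖q‖, 2 * (b - a) * ‖q‖ + 1, by positivity, ?_, fun s hs Y hY => ?_⟩
    · have : 0 ≤ 2 * (b - a) * ‖q‖ := by positivity
      linarith
    have hspos : 0 < s := lt_of_lt_of_le (by positivity) hs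
    obtain ⟨P, Q, h1, h2⟩ := pre s hs Y hY
    rw [hα, mul_zero, add_zero] at h1
    have hP : P = 0 := (mul_eq_zero.1 h1).resolve_right hc
    refine ⟨Q, (ContinuousMap.norm_le _ (by positivity)).2 fun x => ?_⟩
    have := h2 x
    rw [hP, zero_mul, zero_add, abs_zero, zero_add] at this
    simpa [Sn_apply] using this
  · set c := |Real.cos α / Real.sin α| with hc
    have hc0 : 0 ≤ c := abs_nonneg _
    refine ⟨Real.pi / 2, c + 2 * (b - a) * ‖q‖ * (1 + c), 2 * (b - a) * ‖q‖ + 1, by positivity, ?_,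
      fun s hs Y hY => ?_⟩
    · have : 0 ≤ 2 * (b - a) * ‖q‖ := by positivity
      linarith
    have hspos : 0 < s := lt_of_lt_of_le (by positivity) hs
    have hs1 : 1 ≤ s := by
      have : 0 ≤ 2 * (b - a) * ‖q‖ := by positivity
      linarith
    obtain ⟨P, Q, h1, h2⟩ := pre s hs Y hY
    have hQ : |Q| = c * |P| / s := by
      have : Q = - (Real.cos α / Real.sin α * P / s) := by
        field_simp; linarith
      rw [this, abs_neg, abs_div, abs_mul, abs_of_pos hspos]
    have hQ1 : |Q| ≤ c * |P| := by
      rw [hQ]; exact div_le_self (by positivity) hs1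
    refine ⟨P, (ContinuousMap.norm_le _ (by positivity)).2 fun x => ?_⟩
    have h3 := h2 x
    have e : (Y - P • Sn a b s (Real.pi / 2)) x =
        (Y x - (P * Real.cos (s * (x - a)) + Q * Real.sin (s * (x - a)))) +
          Q * Real.sin (s * (x - a)) := by
      simp only [ContinuousMap.sub_apply, ContinuousMap.smul_apply, Sn_apply, smul_eq_mul,
        Real.sin_add_pi_div_two]
      ring
    rw [e, Real.norm_eq_abs]
    refine (abs_add_le _ _).trans ?_
    have h4 : |Q * Real.sin (s * (x - a))| ≤ c * |P| / s := by
      rw [abs_mul, ← hQ]; exact mul_le_of_le_one_right (abs_nonneg Q) (Real.abs_sin_le_one _)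
    have h5 : 2 * (b - a) * ‖q‖ * (|P| + |Q|) / s ≤
        2 * (b - a) * ‖q‖ * (|P| + c * |P|) / s := by gcongr
    calc _ ≤ 2 * (b - a) * ‖q‖ * (|P| + c * |P|) / s + c * |P| / s := by linarith
      _ = _ := by ring

theorem asym_bd (α β : ℝ) (q : X a b) : ∃ C S : ℝ, 0 < C ∧ 0 < S ∧ ∀ s, S ≤ s → ∀ Y : X a b,
    Dom hab α β Y (q * Y - s ^ 2 • Y) → I hab (Y * Y) = 1 →
      ‖Y‖ ≤ C ∧ ∀ x ∈ Icc a b, |∫ t in a..x, ext hab Y t| ≤ C / s := by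
  obtain ⟨θ, K, S0, hK, hS0, H⟩ := asym hab α β q
  have h0 : 0 < b - a := sub_pos.2 hab
  set B := √(16 / (b - a)) with hB
  have hBpos : 0 < B := Real.sqrt_pos.2 (by positivity)
  refine ⟨B * (1 + K) + B * (2 + (b - a) * K), S0 + 4 / (b - a) + 4 * K, by positivity,
    by positivity, fun s hs Y hY hn => ?_⟩
  have hp1 : 0 < 4 / (b - a) := by positivity
  have hs0 : S0 ≤ s := by linarith
  have hs1 : 1 ≤ s := by linarith
  have hspos : 0 < s := by linarith
  have hsL : 1 / (2 * s) ≤ (b - a) / 8 := by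
    have : 4 / (b - a) ≤ s := by linarith
    rw [div_le_iff₀ h0] at this
    rw [div_le_div_iff₀ (by positivity) (by positivity)]
    linarith
  have hsK : K / s ≤ 1 / 4 := by
    rw [div_le_div_iff₀ hspos (by norm_num)]
    linarith
  have hKs : 0 ≤ K / s := by positivity
  obtain ⟨A, hA⟩ := H s hs0 Y hY
  have hA' : ‖Y - A • Sn a b s θ‖ ≤ K / s * |A| := by
    refine hA.trans (le_of_eq (by ring))
  set E := Y - A • Sn a b s θ with hE
  have hAB : |A| ≤ B := by
    refine Real.le_sqrt_of_sq_le ?_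
    rw [sq_abs, le_div_iff₀ h0]
    have h1 := I_Sn_sq hab (θ := θ) hspos
    have h2 : I hab ((A ^ 2) • (Sn a b s θ * Sn a b s θ)) ≤
        I hab ((2 : ℝ) • (Y * Y) + (2 : ℝ) • (E * E)) := by
      refine I_mono hab fun x => ?_
      have e : A * Sn a b s θ x = Y x - E x := by
        rw [hE]; simp
      simp only [ContinuousMap.add_apply, ContinuousMap.smul_apply, ContinuousMap.mul_apply,
        smul_eq_mul]
      have e' : A ^ 2 * (Sn a b s θ x * Sn a b s θ x) = (Y x - E x) ^ 2 := by
        rw [← e]; ring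
      rw [e']
      nlinarith [sq_nonneg (Y x + E x)]
    have h3 : I hab (E * E) ≤ (b - a) * (A ^ 2 / 16) := by
      refine (le_abs_self _).trans ((abs_I_le hab _).trans ?_)
      gcongr
      refine (norm_mul_le _ _).trans ?_
      have h4 : ‖E‖ ≤ |A| / 4 := hA'.trans (by nlinarith [abs_nonneg A])
      calc ‖E‖ * ‖E‖ ≤ (|A| / 4) * (|A| / 4) := by gcongr
        _ = |A| ^ 2 / 16 := by ring
        _ = _ := by rw [sq_abs]
    rw [map_smul, map_add, map_smul, map_smul, hn, smul_eq_mul, smul_eq_mul, smul_eq_mul] at h2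
    have h5 : A ^ 2 * (3 * (b - a) / 8) ≤ A ^ 2 * I hab (Sn a b s θ * Sn a b s θ) := by
      gcongr; linarith
    nlinarith
  constructor
  · have e : Y = A • Sn a b s θ + E := by rw [hE]; abel
    have h1 : ‖Y‖ ≤ |A| * 1 + K / s * |A| := by
      rw [e]
      refine (norm_add_le _ _).trans ?_
      rw [norm_smul, Real.norm_eq_abs]
      gcongr
      exact Sn_norm s θ
    have h2 : K / s ≤ K := div_le_self hK hs1
    calc ‖Y‖ ≤ |A| * 1 + K / s * |A| := h1
      _ ≤ B * 1 + K * B := by gcongr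
      _ = B * (1 + K) := by ring
      _ ≤ _ := by
        have : 0 ≤ B * (2 + (b - a) * K) := by positivity
        linarith
  · intro x hx
    have e : ∫ t in a..x, ext hab Y t = A * (∫ t in a..x, Real.sin (s * (t - a) + θ)) +
        ∫ t in a..x, ext hab E t := by
      rw [← intervalIntegral.integral_const_mul, ← intervalIntegral.integral_add]
      · refine intervalIntegral.integral_congr fun t ht => ?_
        rw [uIcc_of_le hx.1] at ht
        have ht' : t ∈ Icc a b := ⟨ht.1, ht.2.trans hx.2⟩
        simp only [hE, ext_sub, ext_smul]
        rw [ext_Sn hab _ _ ht']; ring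
      · exact Continuous.intervalIntegrable (by fun_prop) _ _
      · exact (ext_cont hab E).intervalIntegrable _ _
    have e2 : ∫ t in a..x, Real.sin (s * (t - a) + θ) =
        -Real.cos (s * (x - a) + θ) / s - -Real.cos (s * (a - a) + θ) / s := by
      rw [intervalIntegral.integral_eq_sub_of_hasDerivAt
        (f := fun t => -Real.cos (s * (t - a) + θ) / s)]
      · intro t _
        have h1 : HasDerivAt (fun t : ℝ => s * (t - a) + θ) s t := by
          have := (((hasDerivAt_id t).sub_const a).const_mul s).add_const θ
          simpa using this
        refine (h1.cos.neg.div_const s).congr_deriv ?_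
        field_simp
      · exact Continuous.intervalIntegrable (by fun_prop) _ _
    have h2 : |∫ t in a..x, Real.sin (s * (t - a) + θ)| ≤ 2 / s := by
      rw [e2, ← sub_div, abs_div, abs_of_pos hspos]
      gcongr
      have h1 := Real.abs_cos_le_one (s * (x - a) + θ)
      have h2 := Real.abs_cos_le_one (s * (a - a) + θ)
      rw [abs_le] at *
      constructor <;> linarith
    have h3 : |∫ t in a..x, ext hab E t| ≤ (b - a) * (K / s * B) := by
      have := intervalIntegral.norm_integral_le_of_norm_le_const (a := a) (b := x)
        (f := ext hab E) (C := ‖E‖) (fun x _ => abs_ext_le hab E x)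
      rw [abs_of_nonneg (sub_nonneg.2 hx.1)] at this
      refine this.trans ?_
      rw [mul_comm]
      have := hx.2
      have h6 : ‖E‖ ≤ K / s * B := hA'.trans (by gcongr)
      gcongr
    rw [e]
    refine (abs_add_le _ _).trans ?_
    rw [abs_mul]
    calc |A| * |∫ t in a..x, Real.sin (s * (t - a) + θ)| + |∫ t in a..x, ext hab E t|
        ≤ B * (2 / s) + (b - a) * (K / s * B) := by gcongr
      _ = (B * (2 + (b - a) * K)) / s := by ring
      _ ≤ _ := by
        gcongr
        have : 0 ≤ B * (1 + K) := by positivity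
        linarith

theorem asym_gap (α β : ℝ) (q : X a b) : ∃ δ S : ℝ, 0 < δ ∧ 0 < S ∧ ∀ s t, S ≤ s → s < t →
    ∀ Y Z : X a b, Y ≠ 0 → Z ≠ 0 →
    Dom hab α β Y (q * Y - s ^ 2 • Y) → Dom hab α β Z (q * Z - t ^ 2 • Z) → I hab (Y * Z) = 0 →
      δ ≤ t - s := by
  obtain ⟨θ, K, S0, hK, hS0, H⟩ := asym hab α β q
  have h0 : 0 < b - a := sub_pos.2 hab
  refine ⟨1 / (4 * (b - a)), S0 + 10 / (b - a) + 20 * K, by positivity, by positivity,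
    fun s t hs hst Y Z hY0 hZ0 hY hZ hI => ?_⟩
  by_contra hlt
  push Not at hlt
  have hp1 : 0 < 10 / (b - a) := by positivity
  have hs0 : S0 ≤ s := by linarith
  have hs1 : 1 ≤ s := by linarith
  have hspos : 0 < s := by linarith
  have hsL : 1 / (2 * s) ≤ (b - a) / 20 := by
    have : 10 / (b - a) ≤ s := by linarith
    rw [div_le_iff₀ h0] at this
    rw [div_le_div_iff₀ (by positivity) (by positivity)]
    linarith
  have aux : ∀ r, s ≤ r → ∀ W : X a b, W ≠ 0 → Dom hab α β W (q * W - r ^ 2 • W) →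
      ∃ A : ℝ, ‖A • W - Sn a b r θ‖ ≤ 1 / 20 := by
    intro r hr W hW0 hW
    have hrpos : 0 < r := by linarith
    obtain ⟨A, hA⟩ := H r (by linarith) W hW
    have hA0 : A ≠ 0 := by
      rintro rfl
      simp at hA; exact hW0 hA
    refine ⟨A⁻¹, ?_⟩
    have e : A⁻¹ • W - Sn a b r θ = A⁻¹ • (W - A • Sn a b r θ) := by
      rw [smul_sub, smul_smul, inv_mul_cancel₀ hA0, one_smul]
    rw [e, norm_smul, norm_inv, Real.norm_eq_abs]
    have hAp : 0 < |A| := abs_pos.2 hA0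
    calc |A|⁻¹ * ‖W - A • Sn a b r θ‖ ≤ |A|⁻¹ * (K * |A| / r) := by gcongr
      _ = K / r := by field_simp
      _ ≤ 1 / 20 := by
        rw [div_le_div_iff₀ hrpos (by norm_num)]; linarith
  obtain ⟨A, hA⟩ := aux s le_rfl Y hY0 hY
  obtain ⟨B, hB⟩ := aux t hst.le Z hZ0 hZ
  set V := Sn a b s θ with hV
  set E1 := A • Y - V with hE1
  set E2 := B • Z - V with hE2
  have hE2n : ‖E2‖ ≤ 3 / 10 := by
    have e : E2 = (B • Z - Sn a b t θ) - (V - Sn a b t θ) := by rw [hE2]; abel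
    rw [e]
    refine (norm_sub_le _ _).trans ?_
    have h1 := Sn_diff hab s t θ
    rw [abs_of_neg (by linarith)] at h1
    have h2 : -(s - t) * (b - a) ≤ 1 / 4 := by
      rw [lt_div_iff₀ (by positivity)] at hlt
      linarith
    linarith
  have hprod : V * V = (A * B) • (Y * Z) - (V * E2 + E1 * V + E1 * E2) := by
    ext x; simp [hE1, hE2]; ring
  have h1 := I_Sn_sq hab (θ := θ) hspos
  rw [← hV, hprod, map_sub, map_smul, hI, smul_zero, zero_sub] at h1
  have h2 : |I hab (V * E2 + E1 * V + E1 * E2)| ≤ (b - a) * (1 * (3 / 10) + 1 / 20 * 1 + 1 / 20 * (3 / 10)) := by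
    refine (abs_I_le hab _).trans ?_
    have := Sn_norm (a := a) (b := b) s θ
    gcongr
    refine (norm_add₃_le).trans ?_
    gcongr
    · exact (norm_mul_le _ _).trans (by gcongr)
    · exact (norm_mul_le _ _).trans (by gcongr)
    · exact (norm_mul_le _ _).trans (by gcongr)
  have h3 := (abs_le.1 h2).1
  linarith

end asym
end SLX

namespace SLX

open Set Filter

section bv
variable {a b : ℝ} (hab : a < b)

theorem abel_sum (f G : ℕ → ℝ) (k : ℕ) : ∑ i ∈ Finset.range k, f i * (G (i + 1) - G i) =
    f k * G k - f 0 * G 0 - ∑ i ∈ Finset.range k, G (i + 1) * (f (i + 1) - f i) := by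
  induction k with
  | zero => simp
  | succ k ih => rw [Finset.sum_range_succ, Finset.sum_range_succ, ih]; ring

theorem bv_bound (Y F : X a b) (hF : BoundedVariationOn (ext hab F) (Icc a b)) {M : ℝ}
    (hM : ∀ x ∈ Icc a b, |∫ t in a..x, ext hab Y t| ≤ M) :
    |I hab (Y * F)| ≤ M * (‖F‖ + (eVariationOn (ext hab F) (Icc a b)).toReal) := by
  have h0 : 0 < b - a := sub_pos.2 hab
  have hM0 : 0 ≤ M := (abs_nonneg _).trans (hM a (left_mem_Icc.2 hab.le))
  refine le_of_forall_pos_le_add fun ε hε => ?_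
  have huc : UniformContinuous F := CompactSpace.uniformContinuous_of_continuous F.continuous
  set ε' := ε / ((b - a) * (‖Y‖ + 1)) with hε'
  have hε'pos : 0 < ε' := by positivity
  obtain ⟨η, hη, hf⟩ := Metric.uniformContinuous_iff.1 huc ε' hε'pos
  obtain ⟨n, hn⟩ := exists_nat_gt ((b - a) / η)
  have hnpos : (0 : ℝ) < n := lt_trans (by positivity) hn
  set h := (b - a) / n with hh
  have hhpos : 0 < h := by positivity
  have hhη : h < η := by
    rw [hh, div_lt_iff₀ hnpos]; rw [div_lt_iff₀ hη] at hn; linarith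
  set u : ℕ → ℝ := fun i => a + i * h with hu
  have hu0 : u 0 = a := by simp [hu]
  have hun : u n = b := by simp only [hu, hh]; field_simp; ring
  have hmono : Monotone u := fun i j hij => by
    simp only [hu]; gcongr
  have hus : ∀ i ≤ n, u i ∈ Icc a b := fun i hi =>
    ⟨by rw [← hu0]; exact hmono (Nat.zero_le i), by rw [← hun]; exact hmono hi⟩
  set G : ℕ → ℝ := fun i => ∫ t in a..u i, ext hab Y t with hG
  set f : ℕ → ℝ := fun i => ext hab F (u i) with hf'
  have cY := ext_cont hab Y
  have cF := ext_cont hab F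
  have hsplit : I hab (Y * F) = ∑ i ∈ Finset.range n, ∫ t in u i..u (i + 1), ext hab Y t * ext hab F t := by
    rw [intervalIntegral.sum_integral_adjacent_intervals
      (fun k _ => Continuous.intervalIntegrable (by fun_prop) _ _), hu0, hun, I_apply]
    rfl
  have hterm : ∀ i ∈ Finset.range n,
      |(∫ t in u i..u (i + 1), ext hab Y t * ext hab F t) - f i * (G (i + 1) - G i)| ≤
        ε' * ‖Y‖ * h := by
    intro i hi
    have hi' : i + 1 ≤ n := Finset.mem_range.1 hi
    have e1 : G (i + 1) - G i = ∫ t in u i..u (i + 1), ext hab Y t := by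
      simp only [hG]
      rw [intervalIntegral.integral_interval_sub_left (cY.intervalIntegrable _ _)
        (cY.intervalIntegrable _ _)]
    rw [e1, ← intervalIntegral.integral_const_mul, ← intervalIntegral.integral_sub
      (Continuous.intervalIntegrable (by fun_prop) _ _)
      (Continuous.intervalIntegrable (by fun_prop) _ _)]
    have hui : u (i + 1) - u i = h := by simp only [hu]; push_cast; ring
    have := intervalIntegral.norm_integral_le_of_norm_le_const (a := u i) (b := u (i + 1))
      (f := fun t => ext hab Y t * ext hab F t - f i * ext hab Y t) (C := ε' * ‖Y‖) (by
        intro t ht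
        rw [uIoc_of_le (hmono (Nat.le_succ i))] at ht
        have hti : t ∈ Icc a b := ⟨(hus i (by omega)).1.trans ht.1.le, ht.2.trans (hus _ hi').2⟩
        have e : ext hab Y t * ext hab F t - f i * ext hab Y t =
            (ext hab F t - f i) * ext hab Y t := by ring
        rw [e, norm_mul]
        gcongr
        · have := hf (a := ⟨t, hti⟩) (b := ⟨u i, hus i (by omega)⟩) (by
            rw [Subtype.dist_eq, Real.dist_eq, abs_of_nonneg (by simp only; linarith [ht.1])]
            simp only; linarith [ht.2])
          simp only [hf']
          rw [ext_mem hab F hti, ext_mem hab F (hus i (by omega))]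
          exact this.le
        · exact abs_ext_le hab Y t)
    rw [hui, abs_of_pos hhpos] at this
    exact this
  have herr : |I hab (Y * F) - ∑ i ∈ Finset.range n, f i * (G (i + 1) - G i)| ≤ ε := by
    rw [hsplit, ← Finset.sum_sub_distrib]
    refine (Finset.abs_sum_le_sum_abs _ _).trans ((Finset.sum_le_sum hterm).trans ?_)
    rw [Finset.sum_const, Finset.card_range, nsmul_eq_mul]
    have e1 : (n : ℝ) * (ε' * ‖Y‖ * h) = ε' * ‖Y‖ * (b - a) := by rw [hh]; field_simp
    have e2 : ε' * ((b - a) * (‖Y‖ + 1)) = ε := by rw [hε']; field_simp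
    rw [e1, ← e2]
    nlinarith [mul_pos hε'pos h0]
  have hvar : ∑ i ∈ Finset.range n, |f (i + 1) - f i| ≤
      (eVariationOn (ext hab F) (Icc a b)).toReal := by
    have h1 := eVariationOn.sum_le_of_monotoneOn_Iic (f := ext hab F) (s := Icc a b) (n := n) (u := u)
      (hmono.monotoneOn _) hus
    have h2 := ENNReal.toReal_mono hF h1
    refine le_trans (le_of_eq ?_) h2
    rw [ENNReal.toReal_sum (fun i _ => edist_ne_top _ _)]
    refine Finset.sum_congr rfl fun i _ => ?_
    rw [edist_dist, ENNReal.toReal_ofReal dist_nonneg, Real.dist_eq]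
  have hG0 : G 0 = 0 := by simp [hG, hu0]
  have hGb : ∀ i ≤ n, |G i| ≤ M := fun i hi => hM _ (hus i hi)
  have hmain : |∑ i ∈ Finset.range n, f i * (G (i + 1) - G i)| ≤
      M * (‖F‖ + (eVariationOn (ext hab F) (Icc a b)).toReal) := by
    rw [abel_sum, hG0, mul_zero, sub_zero, mul_add]
    refine (abs_sub _ _).trans (add_le_add ?_ ?_)
    · rw [abs_mul, mul_comm]
      exact mul_le_mul (hGb n le_rfl) (abs_ext_le hab F _) (abs_nonneg _) hM0
    · refine (Finset.abs_sum_le_sum_abs _ _).trans ?_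
      calc _ ≤ ∑ i ∈ Finset.range n, M * |f (i + 1) - f i| := by
            refine Finset.sum_le_sum fun i hi => ?_
            rw [abs_mul]
            exact mul_le_mul_of_nonneg_right (hGb _ (Finset.mem_range.1 hi)) (abs_nonneg _)
        _ = M * ∑ i ∈ Finset.range n, |f (i + 1) - f i| := by rw [Finset.mul_sum]
        _ ≤ _ := by gcongr
  have := abs_sub_abs_le_abs_sub (I hab (Y * F)) (∑ i ∈ Finset.range n, f i * (G (i + 1) - G i))
  linarith

end bv
end SLX

namespace SLX

open Set Filter

section numeric

theorem sum_sq_le {κ δ : ℝ} (hκ : 0 < κ) (hδ : 0 < δ) (J : ℕ) :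
    ∑ j ∈ Finset.range J, 1 / (κ + δ * j) ^ 2 ≤ 1 / κ ^ 2 + 1 / (δ * κ) := by
  have key : ∀ J : ℕ, ∑ j ∈ Finset.range (J + 1), 1 / (κ + δ * j) ^ 2 ≤
      1 / κ ^ 2 + 1 / (δ * κ) - 1 / (δ * (κ + δ * J)) := by
    intro J
    induction J with
    | zero => simp
    | succ J ih =>
      rw [Finset.sum_range_succ]
      have hp : 0 < κ + δ * J := by positivity
      have : 1 / (κ + δ * ((J + 1 : ℕ) : ℝ)) ^ 2 ≤
          1 / (δ * (κ + δ * J)) - 1 / (δ * (κ + δ * ((J + 1 : ℕ) : ℝ))) := by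
        push_cast
        set v := κ + δ * (J : ℝ) with hv
        have e : κ + δ * ((J : ℝ) + 1) = v + δ := by rw [hv]; ring
        rw [e]
        have e2 : 1 / (δ * v) - 1 / (δ * (v + δ)) = 1 / (v * (v + δ)) := by
          field_simp; ring
        rw [e2]
        apply one_div_le_one_div_of_le (by positivity)
        nlinarith
      linarith
  cases J with
  | zero => simp; positivity
  | succ J =>
    have h1 := key J
    have : 0 < 1 / (δ * (κ + δ * J)) := by positivity
    linarith

theorem gap_iter {σ : ℕ → ℝ} {δ : ℝ} (hgap : ∀ j, σ j + δ ≤ σ (j + 1)) (m k : ℕ) :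
    σ m + δ * k ≤ σ (m + k) := by
  induction k with
  | zero => simp
  | succ k ih =>
    have := hgap (m + k)
    rw [← add_assoc]; push_cast; linarith

theorem count_le {σ : ℕ → ℝ} {δ κ r : ℝ} (hδ : 0 < δ) (hr : 0 ≤ r)
    (hgap : ∀ j, σ j + δ ≤ σ (j + 1))
    (F : Finset ℕ) (hF : ∀ j ∈ F, |σ j - κ| ≤ r) : (F.card : ℝ) ≤ 2 * r / δ + 1 := by
  rcases F.eq_empty_or_nonempty with rfl | hne
  · simp; positivity
  set m := F.min' hne with hm
  set M := F.max' hne with hM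
  have hmM : m ≤ M := F.min'_le _ (F.max'_mem hne)
  have hsub : F ⊆ Finset.Icc m M := fun j hj =>
    Finset.mem_Icc.2 ⟨F.min'_le _ hj, F.le_max' _ hj⟩
  have hcard : F.card ≤ M - m + 1 := by
    refine (Finset.card_le_card hsub).trans ?_
    rw [Nat.card_Icc]; omega
  have h1 := gap_iter hgap m (M - m)
  rw [Nat.add_sub_cancel' hmM] at h1
  have h2 := abs_le.1 (hF m (F.min'_mem hne))
  have h3 := abs_le.1 (hF M (F.max'_mem hne))
  have h4 : ((M - m : ℕ) : ℝ) ≤ 2 * r / δ := by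
    rw [le_div_iff₀ hδ]; linarith
  have h5 : (F.card : ℝ) ≤ ((M - m : ℕ) : ℝ) + 1 := by exact_mod_cast hcard
  linarith

theorem taub_sum {σ : ℕ → ℝ} {δ κ τ : ℝ} (hδ : 0 < δ) (hκ : 0 < κ) (hτ : 0 < τ) (hτ4 : τ ≤ 1 / 4)
    (h0 : 0 < σ 0) (hgap : ∀ j, σ j + δ ≤ σ (j + 1)) (J : ℕ) :
    ∑ j ∈ Finset.range J, 1 / σ j * (τ * (κ ^ 2 / (σ j ^ 2 + κ ^ 2) *
      (1 - κ ^ 2 / (σ j ^ 2 + κ ^ 2))) +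
      if |κ ^ 2 / (σ j ^ 2 + κ ^ 2) - 1 / 2| < τ then 1 else 0) ≤
      τ * (1 / κ + 1 / δ) + 3 * (16 * τ / δ + 1 / κ) := by
  have hlow : ∀ j : ℕ, σ 0 + δ * j ≤ σ j := fun j => by
    have := gap_iter hgap 0 j; rwa [zero_add] at this
  have hpos : ∀ j : ℕ, 0 < σ j := fun j =>
    lt_of_lt_of_le (by positivity) (hlow j)
  simp only [mul_add, Finset.sum_add_distrib]
  refine add_le_add ?_ ?_
  · have ht : ∀ j ∈ Finset.range J, 1 / σ j * (τ * (κ ^ 2 / (σ j ^ 2 + κ ^ 2) *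
      (1 - κ ^ 2 / (σ j ^ 2 + κ ^ 2)))) ≤ τ * κ * (1 / (κ + δ * j) ^ 2) := by
      intro j _
      have hs := hpos j
      have hl := hlow j
      have e : 1 / σ j * (τ * (κ ^ 2 / (σ j ^ 2 + κ ^ 2) * (1 - κ ^ 2 / (σ j ^ 2 + κ ^ 2)))) =
          τ * κ * ((σ j * κ) / (σ j ^ 2 + κ ^ 2) ^ 2) := by
        field_simp; ring
      rw [e]
      refine mul_le_mul_of_nonneg_left ?_ (by positivity)
      have h1 : σ j * κ / (σ j ^ 2 + κ ^ 2) ^ 2 ≤ 1 / (κ + σ j) ^ 2 := by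
        rw [div_le_div_iff₀ (by positivity) (by positivity)]
        have hp : 0 < σ j * κ := by positivity
        nlinarith [sq_nonneg (σ j - κ), sq_nonneg (σ j ^ 2 + κ ^ 2 - 2 * (σ j * κ))]
      refine h1.trans ?_
      gcongr
      linarith
    refine (Finset.sum_le_sum ht).trans ?_
    rw [← Finset.mul_sum]
    calc τ * κ * ∑ j ∈ Finset.range J, 1 / (κ + δ * j) ^ 2 ≤
        τ * κ * (1 / κ ^ 2 + 1 / (δ * κ)) := by gcongr; exact sum_sq_le hκ hδ J
      _ = τ * (1 / κ) + τ * (1 / δ) := by field_simp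
  · set W := (Finset.range J).filter
      fun j => |κ ^ 2 / (σ j ^ 2 + κ ^ 2) - 1 / 2| < τ with hW
    have hwin : ∀ j ∈ W, |σ j - κ| ≤ 8 * τ * κ ∧ 1 / σ j ≤ 3 / κ := by
      intro j hj
      have hj2 := (Finset.mem_filter.1 hj).2
      have hs := hpos j
      have e : κ ^ 2 / (σ j ^ 2 + κ ^ 2) - 1 / 2 =
          (κ - σ j) * (κ + σ j) / (2 * (σ j ^ 2 + κ ^ 2)) := by field_simp; ring
      have hsum : 0 < κ + σ j := by positivity
      rw [e, abs_div, abs_mul, abs_of_pos hsum, abs_of_pos (by positivity : 0 < 2 * (σ j ^ 2 + κ ^ 2)),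
        div_lt_iff₀ (by positivity)] at hj2
      have h1 : |κ - σ j| ≤ 2 * τ * (κ + σ j) := by
        by_contra hlt
        push Not at hlt
        have : 2 * τ * (κ + σ j) * (κ + σ j) < |κ - σ j| * (κ + σ j) := by gcongr
        nlinarith [mul_pos hτ (mul_pos hs hκ)]
      have h2 : |κ - σ j| ≤ (κ + σ j) / 2 := h1.trans (by nlinarith)
      have h3 := abs_le.1 h2
      have h4 : σ j ≤ 3 * κ := by linarith
      constructor
      · rw [abs_sub_comm]; nlinarith
      · rw [div_le_div_iff₀ hs hκ]; linarith
    have hc := count_le (κ := κ) (r := 8 * τ * κ) hδ (by positivity) hgap W fun j hj => (hwin j hj).1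
    simp only [mul_ite, mul_one, mul_zero]
    rw [← Finset.sum_filter, ← mul_add]
    refine (Finset.sum_le_sum fun j hj => (hwin j hj).2).trans ?_
    rw [Finset.sum_const, nsmul_eq_mul]
    calc (W.card : ℝ) * (3 / κ) ≤ (2 * (8 * τ * κ) / δ + 1) * (3 / κ) := by gcongr
      _ = _ := by field_simp; ring

theorem exists_poly {τ : ℝ} (hτ : 0 < τ) (hτ4 : τ ≤ 1 / 4) : ∃ p : Polynomial ℝ, p.eval 1 = 1 ∧
    ∀ u ∈ Icc (0 : ℝ) 1, |(if 1 / 2 < u then 1 else 0) - p.eval u| ≤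
      τ * (u * (1 - u)) + if |u - 1 / 2| < τ then 1 else 0 := by
  set φ : ℝ → ℝ := fun u => max 0 (min 1 ((u - 1 / 2 + τ) / (2 * τ))) with hφ
  have cφ : Continuous φ := by fun_prop
  set g : ℝ → ℝ := fun u => φ u / max u (1 / 4) - (1 - φ u) / max (1 - u) (1 / 4) with hg
  have cg : Continuous g := by
    refine Continuous.sub (cφ.div (by fun_prop) fun u => ?_)
      ((continuous_const.sub cφ).div (by fun_prop) fun u => ?_)
    · exact (lt_of_lt_of_le (by norm_num) (le_max_right _ _)).ne'
    · exact (lt_of_lt_of_le (by norm_num) (le_max_right _ _)).ne'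
  obtain ⟨r, hr⟩ := exists_polynomial_near_of_continuousOn 0 1 g cg.continuousOn τ hτ
  refine ⟨Polynomial.X + Polynomial.X * (1 - Polynomial.X) * r, by simp, fun u hu => ?_⟩
  have h0 : ∀ u, 0 ≤ φ u := fun u => le_max_left _ _
  have h1 : ∀ u, φ u ≤ 1 := fun u => max_le zero_le_one (min_le_left _ _)
  have hz : u ≤ 1 / 2 - τ → φ u = 0 := fun h => by
    refine max_eq_left ((min_le_right _ _).trans ?_)
    exact div_nonpos_of_nonpos_of_nonneg (by linarith) (by positivity)
  have ho : 1 / 2 + τ ≤ u → φ u = 1 := fun h => by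
    have : min 1 ((u - 1 / 2 + τ) / (2 * τ)) = 1 := by
      refine min_eq_left ?_
      rw [le_div_iff₀ (by positivity)]; linarith
    simp only [hφ, this]; norm_num
  have e1 : φ u * u / max u (1 / 4) = φ u := by
    by_cases h : u ≤ 1 / 2 - τ
    · rw [hz h]; simp
    · push Not at h
      have : max u (1 / 4) = u := max_eq_left (by linarith)
      rw [this]
      have : u ≠ 0 := by linarith
      field_simp
  have e2 : (1 - φ u) * (1 - u) / max (1 - u) (1 / 4) = 1 - φ u := by
    by_cases h : 1 / 2 + τ ≤ u
    · rw [ho h]; simp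
    · push Not at h
      have : max (1 - u) (1 / 4) = 1 - u := max_eq_left (by linarith)
      rw [this]
      have : 1 - u ≠ 0 := by linarith
      field_simp
  have e3 : φ u - u = u * (1 - u) * g u := by
    have : u * (1 - u) * g u = (1 - u) * (φ u * u / max u (1 / 4)) -
        u * ((1 - φ u) * (1 - u) / max (1 - u) (1 / 4)) := by
      simp only [hg]; ring
    rw [this, e1, e2]; ring
  have e4 : φ u - (Polynomial.X + Polynomial.X * (1 - Polynomial.X) * r : Polynomial ℝ).eval u =
      - (u * (1 - u) * (r.eval u - g u)) := by
    simp; linear_combination e3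
  have hu0 : 0 ≤ u * (1 - u) := mul_nonneg hu.1 (by linarith [hu.2])
  have b1 : |φ u - (Polynomial.X + Polynomial.X * (1 - Polynomial.X) * r : Polynomial ℝ).eval u| ≤
      τ * (u * (1 - u)) := by
    rw [e4, abs_neg, abs_mul, abs_of_nonneg hu0, mul_comm]
    gcongr
    exact (hr u hu).le
  have b2 : |(if 1 / 2 < u then 1 else 0) - φ u| ≤ if |u - 1 / 2| < τ then 1 else 0 := by
    have := h0 u
    have := h1 u
    split_ifs with hA hB hB
    · rw [abs_le]; constructor <;> linarith
    · rw [abs_lt, not_and_or] at hB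
      have : φ u = 1 := ho (by rcases hB with h | h <;> linarith)
      rw [this]; simp
    · rw [abs_le]; constructor <;> linarith
    · rw [abs_lt, not_and_or] at hB
      have : φ u = 0 := hz (by rcases hB with h | h <;> linarith)
      rw [this]; simp
  have := abs_sub_le (if 1 / 2 < u then 1 else 0) (φ u)
    ((Polynomial.X + Polynomial.X * (1 - Polynomial.X) * r : Polynomial ℝ).eval u)
  linarith

end numeric
end SLX

namespace SLX

open Set Filter

section final
variable {a b : ℝ} (hab : a < b)
variable {α β : ℝ} {q : X a b} {lam : ℕ → ℝ} {Y : ℕ → X a b}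

theorem Sys.facts (hS : Sys hab α β q lam Y) (F : X a b)
    (hF : BoundedVariationOn (ext hab F) (Icc a b)) :
    ∃ (n0 : ℕ) (C δ : ℝ), 0 < C ∧ 0 < δ ∧ (∀ n, n0 ≤ n → 0 < lam n) ∧
      (∀ n, n0 ≤ n → |I hab (F * Y n)| * ‖Y n‖ ≤ C * (1 / √(lam n))) ∧
      (∀ n, n0 ≤ n → √(lam n) + δ ≤ √(lam (n + 1))) := by
  obtain ⟨C, S, hC, hSpos, hbd⟩ := asym_bd hab α β q
  obtain ⟨δ, T, hδ, hT, hgap⟩ := asym_gap hab α β q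
  obtain ⟨n0, hn0⟩ := (hS.tendsto hab).eventually_ge_atTop ((S + T) ^ 2) |>.exists_forall_of_atTop
  have hST : 0 < S + T := by positivity
  have hpos : ∀ n, n0 ≤ n → 0 < lam n := fun n hn => lt_of_lt_of_le (by positivity) (hn0 n hn)
  have hs : ∀ n, n0 ≤ n → S + T ≤ √(lam n) := fun n hn => Real.le_sqrt_of_sq_le (hn0 n hn)
  have hdom : ∀ n, n0 ≤ n → Dom hab α β (Y n) (q * Y n - √(lam n) ^ 2 • Y n) := fun n hn => by
    rw [Real.sq_sqrt (hpos n hn).le]; exact hS.dom n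
  have hne : ∀ n, Y n ≠ 0 := fun n h0 => by
    have := hS.nrm n
    rw [h0] at this; simp at this
  set V := (eVariationOn (ext hab F) (Icc a b)).toReal with hV
  have hV0 : 0 ≤ V := ENNReal.toReal_nonneg
  refine ⟨n0, C * (‖F‖ + V) * C + 1, δ, by positivity, hδ, hpos, fun n hn => ?_, fun n hn => ?_⟩
  · have h1 := hs n hn
    have hsp : 0 < √(lam n) := by linarith
    obtain ⟨h2, h3⟩ := hbd (√(lam n)) (by linarith) (Y n) (hdom n hn) (hS.nrm n)
    have h4 := bv_bound hab (Y n) F hF h3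
    rw [mul_comm (Y n)] at h4
    calc |I hab (F * Y n)| * ‖Y n‖ ≤ (C / √(lam n) * (‖F‖ + V)) * C := by gcongr
      _ = C * (‖F‖ + V) * C * (1 / √(lam n)) := by ring
      _ ≤ _ := by gcongr; linarith
  · have h1 := hs n hn
    have hlt : √(lam n) < √(lam (n + 1)) :=
      Real.sqrt_lt_sqrt (hpos n hn).le (hS.mono (Nat.lt_succ_self n))
    have := hgap (√(lam n)) (√(lam (n + 1))) (by linarith) hlt (Y n) (Y (n + 1)) (hne _) (hne _)
      (hdom n hn) (hdom _ (by omega)) (hS.ortho hab (by omega))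
    linarith

theorem core (hS : Sys hab α β q lam Y) {F : X a b} {n0 N : ℕ} {C δ τ κ : ℝ} (hC : 0 < C)
    (hδ : 0 < δ) (hpos : ∀ n, n0 ≤ n → 0 < lam n)
    (hc : ∀ n, n0 ≤ n → |I hab (F * Y n)| * ‖Y n‖ ≤ C * (1 / √(lam n)))
    (hgap : ∀ n, n0 ≤ n → √(lam n) + δ ≤ √(lam (n + 1)))
    (hτ : 0 < τ) (hτ4 : τ ≤ 1 / 4) {p : Polynomial ℝ}
    (hp : ∀ u ∈ Icc (0 : ℝ) 1, |(if 1 / 2 < u then 1 else 0) - p.eval u| ≤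
      τ * (u * (1 - u)) + if |u - 1 / 2| < τ then 1 else 0)
    (hN : n0 ≤ N) (hκ : 0 < κ) (hκN : κ ^ 2 = lam N) (hk : ∀ n, lam n + κ ^ 2 ≠ 0)
    {R : X a b →L[ℝ] X a b} (hR : Res hab α β q κ R) :
    ‖(∑ n ∈ Finset.range N, I hab (F * Y n) • Y n) - (Polynomial.aeval (κ ^ 2 • R) p) F‖ ≤
      (∑ n ∈ Finset.range n0, |1 - p.eval (κ ^ 2 / (lam n + κ ^ 2))| * (|I hab (F * Y n)| * ‖Y n‖)) +
        C * (τ * (1 / κ + 1 / δ) + 3 * (16 * τ / δ + 1 / κ)) := by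
  set c : ℕ → ℝ := fun n => I hab (F * Y n) with hcdef
  set u : ℕ → ℝ := fun n => κ ^ 2 / (lam n + κ ^ 2) with hu
  set χ : ℕ → ℝ := fun n => if n < N then 1 else 0 with hχ
  set D : ℕ → X a b := fun n => ((χ n - p.eval (u n)) * c n) • Y n with hD
  set B := (∑ n ∈ Finset.range n0, |1 - p.eval (u n)| * (|c n| * ‖Y n‖)) +
        C * (τ * (1 / κ + 1 / δ) + 3 * (16 * τ / δ + 1 / κ)) with hB
  have hDn : ∀ n, ‖D n‖ = |χ n - p.eval (u n)| * (|c n| * ‖Y n‖) := fun n => by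
    simp only [hD]
    rw [norm_smul, Real.norm_eq_abs, abs_mul, mul_assoc]
  have hpart : ∀ m, ∑ n ∈ Finset.range m, ‖D n‖ ≤ B := by
    intro m
    have h1 : ∑ n ∈ Finset.range m, ‖D n‖ ≤ ∑ n ∈ Finset.range (n0 + m), ‖D n‖ :=
      Finset.sum_le_sum_of_subset_of_nonneg (Finset.range_mono (Nat.le_add_left _ _))
        fun _ _ _ => norm_nonneg _
    refine h1.trans ?_
    rw [Finset.sum_range_add, hB]
    refine add_le_add (le_of_eq ?_) ?_
    · refine Finset.sum_congr rfl fun n hn => ?_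
      have : n < N := lt_of_lt_of_le (Finset.mem_range.1 hn) hN
      rw [hDn]; simp only [hχ, if_pos this]
    · have h2 := taub_sum (σ := fun j => √(lam (n0 + j))) hδ hκ hτ hτ4
        (Real.sqrt_pos.2 (hpos _ (by omega))) (fun j => hgap (n0 + j) (by omega)) m
      refine le_trans ?_ (mul_le_mul_of_nonneg_left h2 hC.le)
      rw [Finset.mul_sum]
      refine Finset.sum_le_sum fun j _ => ?_
      have hl := hpos (n0 + j) (by omega)
      rw [hDn, Real.sq_sqrt hl.le]
      have hκ2 : 0 < κ ^ 2 := by positivity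
      have hu01 : u (n0 + j) ∈ Icc (0 : ℝ) 1 := by
        simp only [hu]
        refine ⟨by positivity, ?_⟩
        rw [div_le_one (by positivity)]; linarith
      have hχu : χ (n0 + j) = if 1 / 2 < u (n0 + j) then 1 else 0 := by
        simp only [hχ, hu]
        have : n0 + j < N ↔ 1 / 2 < κ ^ 2 / (lam (n0 + j) + κ ^ 2) := by
          rw [← hS.mono.lt_iff_lt, div_lt_div_iff₀ two_pos (by positivity), ← hκN]
          constructor <;> intro h <;> linarith
        simp only [this]
      have h3 := hp _ hu01
      rw [← hχu] at h3
      have h4 := hc (n0 + j) (by omega)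
      calc _ ≤ (τ * (u (n0 + j) * (1 - u (n0 + j))) +
            if |u (n0 + j) - 1 / 2| < τ then 1 else 0) * (C * (1 / √(lam (n0 + j)))) :=
            mul_le_mul h3 h4 (by positivity) ((abs_nonneg _).trans h3)
        _ = _ := by simp only [hu]; ring
  have hsn : Summable fun n => ‖D n‖ := summable_of_sum_range_le (fun _ => norm_nonneg _) hpart
  have hsD : Summable D := hsn.of_norm
  have hle : ‖∑' n, D n‖ ≤ B :=
    (norm_tsum_le_tsum_norm hsn).trans (Real.tsum_le_of_sum_range_le (fun _ => norm_nonneg _) hpart)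
  have heq : ((∑ n ∈ Finset.range N, c n • Y n) - (Polynomial.aeval (κ ^ 2 • R) p) F) -
      ∑' n, D n = 0 := by
    refine hR.complete hab hS hk fun m => ?_
    have h1 : I hab ((∑' n, D n) * Y m) = (χ m - p.eval (u m)) * c m := by
      have h2 := (I hab).hasSum (hsD.hasSum.mul_right (Y m))
      refine h2.unique ?_
      have h3 := hasSum_ite_eq m ((χ m - p.eval (u m)) * c m)
      refine h3.congr_fun ?_ 
      intro n
      simp only [hD]
      rw [smul_mul_assoc, map_smul, hS.ortho' hab, smul_eq_mul]
      split_ifs with h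
      · rw [h, mul_one]
      · rw [mul_zero]
    have h4 : I hab ((∑ n ∈ Finset.range N, c n • Y n) * Y m) = χ m * c m := by
      rw [Finset.sum_mul, map_sum]
      simp only [smul_mul_assoc, map_smul, hS.ortho' hab, smul_eq_mul, mul_ite, mul_one, mul_zero,
        Finset.sum_ite_eq', Finset.mem_range, hχ, ite_mul, one_mul, zero_mul]
    have h5 := hR.coef_poly hab (hS.dom m) (hk m) p F
    rw [sub_mul, sub_mul, map_sub, map_sub, h1, h4, h5]
    simp only [hu, hcdef]; ring
  rw [sub_eq_zero.1 heq]
  exact hle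

theorem main (hS : Sys hab α β q lam Y) (F : X a b)
    (hF : BoundedVariationOn (ext hab F) (Icc a b)) : ∀ ε > 0, ∀ d > 0, ∀ᶠ N in atTop,
    ∀ x : Icc a b, a + d ≤ x → (x : ℝ) ≤ b - d →
      |∑ n ∈ Finset.range N, I hab (F * Y n) * Y n x - F x| ≤ ε := by
  intro ε hε d hd
  obtain ⟨n0, C, δ, hC, hδ, hpos, hc, hgap⟩ := hS.facts hab F hF
  set τ := min (1 / 4) (ε * δ / (200 * C)) with hτdef
  have hτ : 0 < τ := lt_min (by norm_num) (by positivity)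
  have hτ4 : τ ≤ 1 / 4 := min_le_left _ _
  have hτε : C * (49 * τ / δ) ≤ ε / 4 := by
    have h1 : τ ≤ ε * δ / (200 * C) := min_le_right _ _
    rw [le_div_iff₀ (by positivity)] at h1
    rw [mul_div_assoc', div_le_div_iff₀ hδ (by norm_num)]
    nlinarith [mul_pos hτ hC]
  obtain ⟨p, hp1, hp⟩ := exists_poly hτ hτ4
  have hlim := hS.tendsto hab
  have hκlim : Tendsto (fun N => √(lam N)) atTop atTop := Real.tendsto_sqrt_atTop.comp hlim
  have hA := hκlim.eventually (poly_conv hab (α := α) (β := β) (q := q) F p hp1 (ε / 4) (by positivity) d hd)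
  have hB := hκlim.eventually (exists_Res hab α β q)
  have hC1 : Tendsto (fun κ : ℝ => ∑ n ∈ Finset.range n0,
      |1 - p.eval (κ ^ 2 / (lam n + κ ^ 2))| * (|I hab (F * Y n)| * ‖Y n‖)) atTop (nhds 0) := by
    rw [← Finset.sum_const_zero (s := Finset.range n0)]
    refine tendsto_finsetSum _ fun n _ => ?_
    have h1 : Tendsto (fun κ : ℝ => κ ^ 2 / (lam n + κ ^ 2)) atTop (nhds 1) := by
      have h2 : Tendsto (fun κ : ℝ => lam n + κ ^ 2) atTop atTop :=
        tendsto_atTop_add_const_left _ _ (tendsto_pow_atTop two_ne_zero)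
      have h3 : Tendsto (fun κ : ℝ => 1 - lam n / (lam n + κ ^ 2)) atTop (nhds (1 - 0)) :=
        (tendsto_const_nhds.div_atTop h2).const_sub 1
      rw [sub_zero] at h3
      refine h3.congr' ?_
      filter_upwards [h2.eventually_gt_atTop 0] with κ hκ
      field_simp; ring
    have h4 := (((p.continuous.tendsto 1).comp h1).const_sub 1).abs.mul_const
      (|I hab (F * Y n)| * ‖Y n‖)
    rw [hp1, sub_self, abs_zero, zero_mul] at h4
    exact h4
  have hC2 := (hC1.comp hκlim).eventually (gt_mem_nhds (by positivity : 0 < ε / 4))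
  have hD : ∀ᶠ N in atTop, C * (τ * (1 / √(lam N)) + 3 * (1 / √(lam N))) < ε / 4 := by
    have h1 : Tendsto (fun κ : ℝ => C * (τ * (1 / κ) + 3 * (1 / κ))) atTop
        (nhds (C * (τ * 0 + 3 * 0))) := by
      have h2 : Tendsto (fun κ : ℝ => 1 / κ) atTop (nhds 0) := tendsto_const_nhds.div_atTop tendsto_id
      exact ((h2.const_mul τ).add (h2.const_mul 3)).const_mul C
    have e : C * (τ * 0 + 3 * 0) = 0 := by ring
    rw [e] at h1
    exact (h1.comp hκlim).eventually (gt_mem_nhds (by positivity : 0 < ε / 4))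
  filter_upwards [hA, hB, hC2, hD, eventually_ge_atTop n0, hlim.eventually_gt_atTop (-lam 0)]
    with N hA hB hC2 hD hN hN0 x hxa hxb
  obtain ⟨R, hR⟩ := hB
  have hlN := hpos N hN
  have hκ : 0 < √(lam N) := Real.sqrt_pos.2 hlN
  have hκN : √(lam N) ^ 2 = lam N := Real.sq_sqrt hlN.le
  have hk : ∀ n, lam n + √(lam N) ^ 2 ≠ 0 := fun n => by
    rw [hκN]
    have := hS.mono.monotone (Nat.zero_le n)
    linarith
  have h1 := core hab hS hC hδ hpos hc hgap hτ hτ4 hp hN hκ hκN hk hR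
  have h2 := hA R hR x hxa hxb
  have h3 := (((∑ n ∈ Finset.range N, I hab (F * Y n) • Y n) -
    (Polynomial.aeval (√(lam N) ^ 2 • R) p) F).norm_coe_le_norm x).trans h1
  have e : ((∑ n ∈ Finset.range N, I hab (F * Y n) • Y n) -
    (Polynomial.aeval (√(lam N) ^ 2 • R) p) F) x = ∑ n ∈ Finset.range N, I hab (F * Y n) * Y n x -
      (Polynomial.aeval (√(lam N) ^ 2 • R) p) F x := by
    rw [ContinuousMap.sub_apply, ContinuousMap.sum_apply]; rfl
  rw [e, Real.norm_eq_abs] at h3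
  have h4 := abs_sub_le (∑ n ∈ Finset.range N, I hab (F * Y n) * Y n x)
    ((Polynomial.aeval (√(lam N) ^ 2 • R) p) F x) (F x)
  have h5 : C * (τ * (1 / √(lam N) + 1 / δ) + 3 * (16 * τ / δ + 1 / √(lam N))) =
      C * (49 * τ / δ) + C * (τ * (1 / √(lam N)) + 3 * (1 / √(lam N))) := by ring
  simp only [Function.comp] at hC2
  linarith

end final
end SLX

theorem sl_expansion_converges_interior
    (a b : ℝ) (hab : a < b)
    (q : ℝ → ℝ) (hq : ContinuousOn q (Set.Icc a b))
    (α β : ℝ) (hα : α ∈ Set.Ico 0 (2 * Real.pi)) (hβ : β ∈ Set.Ico 0 (2 * Real.pi))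
    (lam : ℕ → ℝ) (y : ℕ → ℝ → ℝ)
    (heig : ∀ n, IsSLEigenpair a b q α β (lam n) (y n))
    (hmono : StrictMono lam)
    (hcomplete : ∀ μ z, IsSLEigenpair a b q α β μ z → ∃ n, lam n = μ)
    (hnorm : ∀ n, ∫ x in a..b, (y n x) ^ 2 = 1)
    (f : ℝ → ℝ) (hf : ContinuousOn f (Set.Icc a b))
    (hbv : BoundedVariationOn f (Set.Icc a b))
    (c : ℕ → ℝ) (hc : ∀ n, c n = ∫ x in a..b, y n x * f x) :
    (∀ x ∈ Set.Ioo a b,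
      Filter.Tendsto (fun N : ℕ => ∑ n ∈ Finset.range N, c n * y n x)
        Filter.atTop (nhds (f x))) ∧
    (∀ K ⊆ Set.Ioo a b, IsCompact K →
      TendstoUniformlyOn (fun (N : ℕ) (x : ℝ) => ∑ n ∈ Finset.range N, c n * y n x)
        f Filter.atTop K) := by
  have hunif : ∀ K ⊆ Set.Ioo a b, IsCompact K →
      TendstoUniformlyOn (fun (N : ℕ) (x : ℝ) => ∑ n ∈ Finset.range N, c n * y n x)
        f Filter.atTop K := by
    let q' : SLX.X a b := ⟨(Set.Icc a b).domRestrict q, hq.domRestrict⟩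
    let F : SLX.X a b := ⟨(Set.Icc a b).domRestrict f, hf.domRestrict⟩
    have hq' : ∀ x ∈ Set.Icc a b, SLX.ext hab q' x = q x := fun x hx => by
      rw [SLX.ext_mem hab _ hx]; rfl
    have hF' : ∀ x ∈ Set.Icc a b, SLX.ext hab F x = f x := fun x hx => by
      rw [SLX.ext_mem hab _ hx]; rfl
    choose Y hY hY0 hdom using fun n => SLX.dom_of_eig hab hq' (heig n)
    have hS : SLX.Sys hab α β q' lam Y := by
      refine ⟨hdom, fun n => ?_, hmono, fun μ w hw hd => hcomplete μ _ (SLX.eig_of_dom hab hq' hw hd)⟩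
      rw [SLX.I_apply, ← hnorm n]
      refine intervalIntegral.integral_congr fun x hx => ?_
      rw [Set.uIcc_of_le hab.le] at hx
      simp only [SLX.ext_mul, hY n x hx]; ring
    have hFbv : BoundedVariationOn (SLX.ext hab F) (Set.Icc a b) := by
      have : eVariationOn (SLX.ext hab F) (Set.Icc a b) = eVariationOn f (Set.Icc a b) :=
        eVariationOn.eq_of_eqOn hF'
      rw [BoundedVariationOn, this]; exact hbv
    have hcI : ∀ n, c n = SLX.I hab (F * Y n) := fun n => by
      rw [SLX.I_apply, hc n]
      refine intervalIntegral.integral_congr fun x hx => ?_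
      rw [Set.uIcc_of_le hab.le] at hx
      simp only [SLX.ext_mul, hY n x hx, hF' x hx]; ring
    intro K hK hKc
    obtain ⟨d, hd, hKd⟩ : ∃ d > 0, ∀ x ∈ K, a + d ≤ x ∧ x ≤ b - d := by
      rcases K.eq_empty_or_nonempty with rfl | hne
      · exact ⟨1, one_pos, by simp⟩
      obtain ⟨m, hm, hmin⟩ := hKc.exists_isLeast hne
      obtain ⟨M, hM, hmax⟩ := hKc.exists_isGreatest hne
      have h1 := (hK hm).1
      have h2 := (hK hM).2
      refine ⟨min (m - a) (b - M), lt_min (by linarith) (by linarith), fun x hx => ?_⟩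
      have h3 := hmin hx
      have h4 := hmax hx
      have h5 := min_le_left (m - a) (b - M)
      have h6 := min_le_right (m - a) (b - M)
      constructor <;> linarith
    rw [Metric.tendstoUniformlyOn_iff]
    intro ε hε
    filter_upwards [SLX.main hab hS F hFbv (ε / 2) (by positivity) d hd] with N hN x hx
    have hxI : x ∈ Set.Icc a b := Set.Ioo_subset_Icc_self (hK hx)
    have h1 := hN ⟨x, hxI⟩ (hKd x hx).1 (hKd x hx).2
    have e : ∑ n ∈ Finset.range N, c n * y n x =
        ∑ n ∈ Finset.range N, SLX.I hab (F * Y n) * Y n ⟨x, hxI⟩ := by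
      refine Finset.sum_congr rfl fun n _ => ?_
      rw [hcI, ← hY n x hxI, SLX.ext_mem hab _ hxI]
    have e2 : F ⟨x, hxI⟩ = f x := rfl
    rw [dist_comm, Real.dist_eq, e, ← e2]
    linarith
  refine ⟨fun x hx => ?_, hunif⟩
  exact (hunif {x} (by simpa using hx) isCompact_singleton).tendsto_at (Set.mem_singleton x)
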